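/- arXiv:1507.04454 — 3 statements merged into one kernel-verified Lean document; each statement's English description precedes it below -/
import Mathlib

section
/- For every even n ≥ 4, the ℚ-linear span of {t_σ : σ ∈ Sₙ} is a codimension-one subspace of Inv(sl₂^{⊗n}), and Inv(sl₂^{⊗n}) is the direct sum of this span and the line ℚ·c^{(n)}, where c^{(n)} ∈ sl₂^{⊗n} is the tensor consisting of a copy of the Casimir c = (1/2)·h⊗h + e⊗f + f⊗e in each pair of positions (1,2), (3,4), …, (n−1,n). In particular c^{(n)} does not lie in the span of {t_σ : σ ∈ Sₙ}. (Equivalently, the homotopy sl₂ weight system W^h_n has one-dimensional cokernel spanned by c^{⊗ n/2}.) -/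
/- For every even n = 2m ≥ 4, the ℚ-span S of the tensors t_σ (σ ∈ Sₙ) is a
   codimension-one subspace of Inv(sl₂^{⊗n}), and Inv(sl₂^{⊗n}) = S ⊕ ℚ·c^{(n)},
   where c^{(n)} is the tensor made of a copy of the Casimir
   c = (1/2)h⊗h + e⊗f + f⊗e in each pair of positions (1,2),(3,4),…,(n−1,n).
   In particular c^{(n)} is not in S.  κ and the family t are quantified via
   their defining properties. -/

open scoped TensorProduct

set_option synthInstance.maxHeartbeats 1000000
set_option maxHeartbeats 1000000

noncomputable section

abbrev sl2 : Type := ↥(LieAlgebra.SpecialLinear.sl (Fin 2) ℚ)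

def H : sl2 :=
  ⟨!![1, 0; 0, -1], show _ ∈ LinearMap.ker (Matrix.traceLinearMap (Fin 2) ℚ ℚ) from
    LinearMap.mem_ker.2 (by simp [Matrix.trace_fin_two])⟩

def E : sl2 :=
  ⟨!![0, 1; 0, 0], show _ ∈ LinearMap.ker (Matrix.traceLinearMap (Fin 2) ℚ ℚ) from
    LinearMap.mem_ker.2 (by simp [Matrix.trace_fin_two])⟩

def F : sl2 :=
  ⟨!![0, 0; 1, 0], show _ ∈ LinearMap.ker (Matrix.traceLinearMap (Fin 2) ℚ ℚ) from
    LinearMap.mem_ker.2 (by simp [Matrix.trace_fin_two])⟩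

/-- The n-fold tensor power sl₂^{⊗n}. -/
abbrev TP (n : ℕ) : Type := ⨂[ℚ] (_ : Fin n), sl2

/-- The adjoint action of `x ∈ sl₂` on `sl₂^{⊗n}`, extended as a derivation. -/
def actOn (n : ℕ) (x : sl2) : TP n →ₗ[ℚ] TP n :=
  ∑ i : Fin n,
    PiTensorProduct.map (fun j => if j = i then LieAlgebra.ad ℚ sl2 x else LinearMap.id)

/-- The space of invariant tensors of `sl₂^{⊗n}`. -/
def Invariants (n : ℕ) : Submodule ℚ (TP n) :=
  ⨅ x : sl2, LinearMap.ker (actOn n x)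

/-- Pairing of `sl₂^{⊗n}` against `x₁ ⊗ ⋯ ⊗ xₙ` via `κ^{⊗n}`:
on pure tensors, `pairT κ n x (a₁ ⊗ ⋯ ⊗ aₙ) = ∏ i, κ(aᵢ, xᵢ)`. -/
def pairT (κ : sl2 →ₗ[ℚ] sl2 →ₗ[ℚ] ℚ) (n : ℕ) (x : Fin n → sl2) : TP n →ₗ[ℚ] ℚ :=
  PiTensorProduct.lift
    ((MultilinearMap.mkPiAlgebra ℚ (Fin n) ℚ).compLinearMap fun i => κ.flip (x i))

/-- Left-iterated Lie bracket of a list: `[[⋯[a₁,a₂],⋯],a_k]`. -/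
def lBrk : List sl2 → sl2
  | [] => 0
  | a :: l => l.foldl (fun y z => ⁅y, z⁆) a

/-- `κ([[⋯[x₁,x₂],⋯],x_{k-1}], x_k)`, read as `κ(x₁,x₂)` when `k = 2`. -/
def brkVal (κ : sl2 →ₗ[ℚ] sl2 →ₗ[ℚ] ℚ) {k : ℕ} (x : Fin k → sl2) : ℚ :=
  κ (lBrk (List.ofFn x).dropLast) ((List.ofFn x).getLastD 0)

/-- The components of the Casimir tensor `c = Σ_a coef3 a • (u3 a ⊗ w3 a)`. -/
def u3 : Fin 3 → sl2 := ![H, E, F]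
def w3 : Fin 3 → sl2 := ![H, F, E]
def coef3 : Fin 3 → ℚ := ![1/2, 1, 1]

/-- `c^{(2m)} ∈ sl₂^{⊗2m}`: a copy of the Casimir tensor `c` in each pair of
positions `(1,2), (3,4), …, (2m−1,2m)`. -/
def cPow (m : ℕ) : TP (2 * m) :=
  ∑ g : Fin m → Fin 3, (∏ i, coef3 (g i)) •
    PiTensorProduct.tprod ℚ (fun j : Fin (2 * m) =>
      if j.1 % 2 = 0 then u3 (g ⟨j.1 / 2, by have := j.2; omega⟩)
      else w3 (g ⟨j.1 / 2, by have := j.2; omega⟩))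

set_option linter.all false

theorem lieHE : ⁅H, E⁆ = (2:ℚ) • E := by
  apply Subtype.ext
  change (!![1, 0; 0, -1] : Matrix (Fin 2) (Fin 2) ℚ) * !![0, 1; 0, 0] - !![0, 1; 0, 0] * !![1, 0; 0, -1] = (2:ℚ) • !![0, 1; 0, 0]
  ext i j; fin_cases i <;> fin_cases j <;> norm_num [Matrix.mul_apply, Fin.sum_univ_two]

theorem lieHF : ⁅H, F⁆ = (-2:ℚ) • F := by
  apply Subtype.ext
  change (!![1, 0; 0, -1] : Matrix (Fin 2) (Fin 2) ℚ) * !![0, 0; 1, 0] - !![0, 0; 1, 0] * !![1, 0; 0, -1] = (-2:ℚ) • !![0, 0; 1, 0]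
  ext i j; fin_cases i <;> fin_cases j <;> norm_num [Matrix.mul_apply, Fin.sum_univ_two]

theorem lieEF : ⁅E, F⁆ = H := by
  apply Subtype.ext
  change (!![0, 1; 0, 0] : Matrix (Fin 2) (Fin 2) ℚ) * !![0, 0; 1, 0] - !![0, 0; 1, 0] * !![0, 1; 0, 0] = !![1, 0; 0, -1]
  ext i j; fin_cases i <;> fin_cases j <;> norm_num [Matrix.mul_apply, Fin.sum_univ_two]

theorem lieEH : ⁅E, H⁆ = (-2:ℚ) • E := by rw [← lie_skew, lieHE]; module
theorem lieFH : ⁅F, H⁆ = (2:ℚ) • F := by rw [← lie_skew, lieHF]; module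
theorem lieFE : ⁅F, E⁆ = (-1:ℚ) • H := by rw [← lie_skew, lieEF]; module

theorem coords (x : sl2) : ∃ a b c : ℚ, x = a • H + b • E + c • F := by
  obtain ⟨M, hM⟩ := x
  have h0 : Matrix.trace M = 0 := LinearMap.mem_ker.1 hM
  rw [Matrix.trace_fin_two] at h0
  refine ⟨M 0 0, M 0 1, M 1 0, ?_⟩
  apply Subtype.ext
  change M = (M 0 0) • !![1, 0; 0, -1] + (M 0 1) • !![0, 1; 0, 0] + (M 1 0) • !![0, 0; 1, 0]
  ext i j; fin_cases i <;> fin_cases j <;> simp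
  linarith

/-- The nine defining values of the form. -/
structure IsK (κ : sl2 →ₗ[ℚ] sl2 →ₗ[ℚ] ℚ) : Prop where
  HH : κ H H = 2
  EF : κ E F = 1
  FE : κ F E = 1
  HE : κ H E = 0
  EH : κ E H = 0
  HF : κ H F = 0
  FH : κ F H = 0
  EE : κ E E = 0
  FF : κ F F = 0

/-- Casimir element eigenvalue and its polarized version, for bilinear maps. -/
theorem cas_one {M : Type*} [AddCommGroup M] [Module ℚ M] (f : sl2 →ₗ[ℚ] M) (x : sl2) :
    ∑ a : Fin 3, coef3 a • f ⁅u3 a, ⁅w3 a, x⁆⁆ = (4:ℚ) • f x := by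
  obtain ⟨a, b, c, rfl⟩ := coords x
  simp only [Fin.sum_univ_three, coef3, u3, w3, Matrix.cons_val_zero, Matrix.cons_val_one,
    Matrix.cons_val]
  simp only [map_add, map_smul, LinearMap.add_apply, LinearMap.smul_apply, smul_eq_mul,
    lie_add, add_lie, smul_lie, lie_smul, lie_self, lie_zero, zero_lie, smul_zero, lieHE, lieEH, lieHF, lieFH, lieEF, lieFE,
    map_zero]
  module

theorem cas_inv {M : Type*} [AddCommGroup M] [Module ℚ M] (B : sl2 →ₗ[ℚ] sl2 →ₗ[ℚ] M)
    (y : sl2) :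
    ∑ a : Fin 3, coef3 a • (B ⁅y, u3 a⁆ (w3 a) + B (u3 a) ⁅y, w3 a⁆) = 0 := by
  obtain ⟨a, b, c, rfl⟩ := coords y
  simp only [Fin.sum_univ_three, coef3, u3, w3, Matrix.cons_val_zero, Matrix.cons_val_one,
    Matrix.cons_val]
  simp only [map_add, map_smul, LinearMap.add_apply, LinearMap.smul_apply, smul_eq_mul,
    lie_add, add_lie, smul_lie, lie_smul, lie_self, lie_zero, zero_lie, smul_zero, lieHE, lieEH, lieHF, lieFH, lieEF, lieFE,
    map_zero, LinearMap.zero_apply]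
  module

theorem cas_anti {M : Type*} [AddCommGroup M] [Module ℚ M] (B : sl2 →ₗ[ℚ] sl2 →ₗ[ℚ] M)
    (u v : sl2) :
    B u v - B v u = (1/2:ℚ) • ∑ a : Fin 3, coef3 a • B (u3 a) ⁅w3 a, ⁅u, v⁆⁆ := by
  obtain ⟨a, b, c, rfl⟩ := coords u
  obtain ⟨a', b', c', rfl⟩ := coords v
  simp only [Fin.sum_univ_three, coef3, u3, w3, Matrix.cons_val_zero, Matrix.cons_val_one,
    Matrix.cons_val]
  simp only [map_add, map_smul, LinearMap.add_apply, LinearMap.smul_apply, smul_eq_mul,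
    lie_add, add_lie, smul_lie, lie_smul, lie_self, lie_zero, zero_lie, smul_zero, lieHE, lieEH, lieHF, lieFH, lieEF, lieFE,
    map_zero, LinearMap.zero_apply]
  module

section forms
variable {κ : sl2 →ₗ[ℚ] sl2 →ₗ[ℚ] ℚ} (hκ : IsK κ)
include hκ

theorem k_symm (x y : sl2) : κ x y = κ y x := by
  obtain ⟨a, b, c, rfl⟩ := coords x
  obtain ⟨a', b', c', rfl⟩ := coords y
  simp only [map_add, map_smul, LinearMap.add_apply, LinearMap.smul_apply, smul_eq_mul,
    hκ.HH, hκ.EF, hκ.FE, hκ.HE, hκ.EH, hκ.HF, hκ.FH, hκ.EE, hκ.FF]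
  ring

theorem k_inv (x y z : sl2) : κ ⁅x, y⁆ z = κ x ⁅y, z⁆ := by
  obtain ⟨a, b, c, rfl⟩ := coords x
  obtain ⟨a', b', c', rfl⟩ := coords y
  obtain ⟨a2, b2, c2, rfl⟩ := coords z
  simp only [map_add, map_smul, LinearMap.add_apply, LinearMap.smul_apply, smul_eq_mul,
    lie_add, add_lie, smul_lie, lie_smul, lie_self, lie_zero, zero_lie, smul_zero, lieHE, lieEH, lieHF, lieFH, lieEF, lieFE,
    map_zero, LinearMap.zero_apply,
    hκ.HH, hκ.EF, hκ.FE, hκ.HE, hκ.EH, hκ.HF, hκ.FH, hκ.EE, hκ.FF]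
  ring

theorem brk3 (p q r : sl2) : ⁅⁅p, q⁆, r⁆ = (2 * κ q r) • p - (2 * κ p r) • q := by
  obtain ⟨a, b, c, rfl⟩ := coords p
  obtain ⟨a', b', c', rfl⟩ := coords q
  obtain ⟨a2, b2, c2, rfl⟩ := coords r
  simp only [map_add, map_smul, LinearMap.add_apply, LinearMap.smul_apply, smul_eq_mul,
    lie_add, add_lie, smul_lie, lie_smul, lie_self, lie_zero, zero_lie, smul_zero, lieHE, lieEH, lieHF, lieFH, lieEF, lieFE,
    map_zero, LinearMap.zero_apply,
    hκ.HH, hκ.EF, hκ.FE, hκ.HE, hκ.EH, hκ.HF, hκ.FH, hκ.EE, hκ.FF]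
  module

theorem key4 (u v a x : sl2) : κ u v • ⁅a, x⁆ =
    (1/4 : ℚ) • (⁅⁅⁅a, u⁆, v⁆, x⁆ + ⁅⁅⁅u, x⁆, v⁆, a⁆ - ⁅⁅⁅x, a⁆, v⁆, u⁆) := by
  simp only [brk3 hκ _ _ v, sub_lie, smul_lie]
  rw [← lie_skew x a, ← lie_skew x u, ← lie_skew u a]
  module

theorem cas_two {M : Type*} [AddCommGroup M] [Module ℚ M] (B : sl2 →ₗ[ℚ] sl2 →ₗ[ℚ] M)
    (u v : sl2) :
    ∑ a : Fin 3, coef3 a • B ⁅w3 a, u⁆ ⁅u3 a, v⁆ =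
      (2:ℚ) • (B v u - κ u v • ∑ a : Fin 3, coef3 a • B (u3 a) (w3 a)) := by
  obtain ⟨a, b, c, rfl⟩ := coords u
  obtain ⟨a', b', c', rfl⟩ := coords v
  simp only [Fin.sum_univ_three, coef3, u3, w3, Matrix.cons_val_zero, Matrix.cons_val_one,
    Matrix.cons_val]
  simp only [map_add, map_smul, LinearMap.add_apply, LinearMap.smul_apply, smul_eq_mul,
    lie_add, add_lie, smul_lie, lie_smul, lie_self, lie_zero, zero_lie, smul_zero, lieHE, lieEH, lieHF, lieFH, lieEF, lieFE,
    map_zero, LinearMap.zero_apply,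
    hκ.HH, hκ.EF, hκ.FE, hκ.HE, hκ.EH, hκ.HF, hκ.FH, hκ.EE, hκ.FF]
  module

theorem dual_expand (x : sl2) : x = ∑ a : Fin 3, κ x (w3 a) • coef3 a • u3 a := by
  obtain ⟨a, b, c, rfl⟩ := coords x
  simp only [Fin.sum_univ_three, coef3, u3, w3, Matrix.cons_val_zero, Matrix.cons_val_one,
    Matrix.cons_val]
  simp only [map_add, map_smul, LinearMap.add_apply, LinearMap.smul_apply, smul_eq_mul,
    hκ.HH, hκ.EF, hκ.FE, hκ.HE, hκ.EH, hκ.HF, hκ.FH, hκ.EE, hκ.FF]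
  module

theorem k_cas (x y : sl2) : ∑ a : Fin 3, coef3 a * (κ (u3 a) x * κ (w3 a) y) = κ x y := by
  conv_rhs => rw [k_symm hκ, dual_expand hκ y]
  simp only [map_sum, map_smul, LinearMap.sum_apply, LinearMap.smul_apply, smul_eq_mul]
  refine Finset.sum_congr rfl fun a _ => ?_
  rw [k_symm hκ y]; ring

end forms

/-- Left-iterated bracket. -/
def fb (a : sl2) (l : List sl2) : sl2 := l.foldl (fun y z => ⁅y, z⁆) a

theorem fb_nil (a : sl2) : fb a [] = a := rfl
theorem fb_cons (a b : sl2) (l : List sl2) : fb a (b :: l) = fb ⁅a, b⁆ l := rfl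
theorem fb_append (a : sl2) (l l' : List sl2) : fb a (l ++ l') = fb (fb a l) l' := by
  simp [fb]

theorem fb_add (l : List sl2) (a b : sl2) : fb (a + b) l = fb a l + fb b l := by
  induction l generalizing a b with
  | nil => rfl
  | cons c l ih => simp only [fb_cons, add_lie, ih]

theorem fb_smul (l : List sl2) (r : ℚ) (a : sl2) : fb (r • a) l = r • fb a l := by
  induction l generalizing a with
  | nil => rfl
  | cons c l ih => simp only [fb_cons, smul_lie, ih]

theorem fb_sub (l : List sl2) (a b : sl2) : fb (a - b) l = fb a l - fb b l := by
  induction l generalizing a b with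
  | nil => rfl
  | cons c l ih => simp only [fb_cons, sub_lie, ih]

theorem jac (w u v : sl2) : ⁅w, ⁅u, v⁆⁆ = ⁅⁅w, u⁆, v⁆ - ⁅⁅w, v⁆, u⁆ := by
  rw [leibniz_lie w u v, ← lie_skew u ⁅w, v⁆, sub_eq_add_neg]

section treespan
variable {Ω : Type} (κ : sl2 →ₗ[ℚ] sl2 →ₗ[ℚ] ℚ)

/-- The linear tree with end leaves `a`, `b` and inner leaves `l`, as a function. -/
def tr (a : Ω → sl2) (l : List (Ω → sl2)) (b : Ω → sl2) : Ω → ℚ :=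
  fun ω => κ (fb (a ω) (l.map (fun g => g ω))) (b ω)

/-- Span of the linear trees (with at least three leaves) with leaves `L`. -/
def SS (L : List (Ω → sl2)) : Submodule ℚ (Ω → ℚ) :=
  Submodule.span ℚ {φ | ∃ a b l, l ≠ [] ∧ (a :: b :: l).Perm L ∧ φ = tr κ a l b}

/-- Pointwise bracket. -/
def bk (u v : Ω → sl2) : Ω → sl2 := fun ω => ⁅u ω, v ω⁆

/-- Pointwise form. -/
def kf (u v : Ω → sl2) : Ω → ℚ := fun ω => κ (u ω) (v ω)

/-- Product of pairings of consecutive elements (zero in odd length). -/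
def CC : List (Ω → sl2) → (Ω → ℚ)
  | [] => 1
  | [_] => 0
  | a :: b :: l => kf κ a b * CC l

/-- Trees plus the standard matching. -/
def WW (L : List (Ω → sl2)) : Submodule ℚ (Ω → ℚ) := SS κ L ⊔ Submodule.span ℚ {CC κ L}

variable {κ}

theorem SS_perm {L L' : List (Ω → sl2)} (h : L.Perm L') : SS κ L = SS κ L' := by
  unfold SS
  congr 1
  ext φ
  constructor
  · rintro ⟨a, b, l, h1, h2, h3⟩
    exact ⟨a, b, l, h1, h2.trans h, h3⟩
  · rintro ⟨a, b, l, h1, h2, h3⟩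
    exact ⟨a, b, l, h1, h2.trans h.symm, h3⟩

theorem tr_mem {L : List (Ω → sl2)} (a b : Ω → sl2) (l) (h1 : l ≠ [])
    (h2 : (a :: b :: l).Perm L) : tr κ a l b ∈ SS κ L :=
  Submodule.subset_span ⟨a, b, l, h1, h2, rfl⟩

variable (hκ : IsK κ)
include hκ

open Classical in
theorem SS_cob (u v : Ω → sl2) (L : List (Ω → sl2)) : SS κ (bk u v :: L) ≤ SS κ (u :: v :: L) := by
  refine Submodule.span_le.2 ?_
  rintro _ ⟨a, b, l, hl, hp, rfl⟩
  have hm : bk u v ∈ a :: b :: l := hp.symm.subset (List.mem_cons_self)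
  have hc := fun x => List.perm_iff_count.1 hp x
  rcases List.mem_cons.1 hm with h | hm
  · subst h
    refine tr_mem u b (v :: l) (by simp) ?_
    refine List.perm_iff_count.2 fun x => ?_
    have := hc x
    simp only [List.count_cons, List.count_append] at this ⊢
    omega
  rcases List.mem_cons.1 hm with h | hm
  · subst h
    have : tr κ a l (bk u v) = tr κ a (l ++ [u]) v := by
      funext ω
      simp only [tr, bk, List.map_append, fb_append, List.map_cons, List.map_nil, fb_cons, fb_nil]
      rw [k_inv hκ]
    rw [this]
    refine tr_mem a v (l ++ [u]) (by simp) ?_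
    refine List.perm_iff_count.2 fun x => ?_
    have := hc x
    simp only [List.count_cons, List.count_append, List.count_nil] at this ⊢
    omega
  · obtain ⟨l1, l2, rfl⟩ := List.append_of_mem hm
    have : tr κ a (l1 ++ bk u v :: l2) b =
        tr κ a (l1 ++ u :: v :: l2) b - tr κ a (l1 ++ v :: u :: l2) b := by
      funext ω
      simp only [tr, bk, List.map_append, fb_append, List.map_cons, fb_cons, Pi.sub_apply]
      rw [← LinearMap.sub_apply, ← map_sub, ← fb_sub, jac]
    rw [this]
    refine Submodule.sub_mem _ (tr_mem a b _ (by simp) ?_) (tr_mem a b _ (by simp) ?_) <;>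
    · refine List.perm_iff_count.2 fun x => ?_
      have := hc x
      simp only [List.count_cons, List.count_append, List.count_nil] at this ⊢
      omega

open Classical in
theorem SS_kmul (u v : Ω → sl2) (L : List (Ω → sl2)) (φ : Ω → ℚ) (hφ : φ ∈ SS κ L) :
    kf κ u v * φ ∈ SS κ (u :: v :: L) := by
  unfold SS at hφ
  induction hφ using Submodule.span_induction with
  | zero => simp
  | add x y _ _ hx hy => rw [mul_add]; exact Submodule.add_mem _ hx hy
  | smul r x _ hx => rw [mul_smul_comm]; exact Submodule.smul_mem _ _ hx
  | mem φ h =>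
    obtain ⟨a, b, l, hl, hp, rfl⟩ := h
    obtain ⟨x, l, rfl⟩ := List.exists_cons_of_ne_nil hl
    have : kf κ u v * tr κ a (x :: l) b = (1/4 : ℚ) • (tr κ a (u :: v :: x :: l) b
        + tr κ u (x :: v :: a :: l) b - tr κ x (a :: v :: u :: l) b) := by
      funext ω
      simp only [tr, kf, List.map_cons, fb_cons, Pi.sub_apply, Pi.add_apply, Pi.smul_apply,
        Pi.mul_apply]
      rw [← smul_eq_mul, ← LinearMap.smul_apply, ← map_smul, ← fb_smul, key4 hκ,
        ← LinearMap.add_apply, ← map_add, ← fb_add, ← LinearMap.sub_apply, ← map_sub, ← fb_sub,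
        ← LinearMap.smul_apply, ← map_smul, ← fb_smul]
    rw [this]
    have hc := fun x => List.perm_iff_count.1 hp x
    refine Submodule.smul_mem _ _ (Submodule.sub_mem _ (Submodule.add_mem _ ?_ ?_) ?_) <;>
    · refine tr_mem _ _ _ (by simp) ?_
      refine List.perm_iff_count.2 fun y => ?_
      have := hc y
      simp only [List.count_cons, List.count_append, List.count_nil] at this ⊢
      omega

open Classical in
theorem SS_Cmul (L M : List (Ω → sl2)) (φ : Ω → ℚ) (hφ : φ ∈ SS κ L) :
    φ * CC κ M ∈ SS κ (L ++ M) := by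
  match M with
  | [] => simpa [CC] using hφ
  | [_] => simp [CC]
  | a :: b :: M =>
    have := SS_kmul hκ a b _ _ (SS_Cmul L M φ hφ)
    rw [SS_perm (L' := L ++ a :: b :: M)] at this
    · convert this using 1
      simp only [CC]; ring
    · refine List.perm_iff_count.2 fun y => ?_
      simp only [List.count_cons, List.count_append, List.count_nil]
      omega

theorem kf_symm (u v : Ω → sl2) : kf κ u v = kf κ v u := by
  funext ω; exact k_symm hκ _ _

theorem CC_swap (l1 : List (Ω → sl2)) (a b : Ω → sl2) (l2 : List (Ω → sl2)) :
    CC κ (l1 ++ a :: b :: l2) - CC κ (l1 ++ b :: a :: l2) ∈ SS κ (l1 ++ a :: b :: l2) := by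
  match l1 with
  | [] =>
    simp only [List.nil_append, CC]
    rw [kf_symm hκ a b]; simp
  | [p] =>
    match l2 with
    | [] => simp [CC]
    | q :: l2 =>
      simp only [List.cons_append, List.nil_append, CC]
      have h0 : tr κ a [b, p] q ∈ SS κ [p, a, b, q] := by
        classical
        refine tr_mem _ _ _ (by simp) ?_
        refine List.perm_iff_count.2 fun y => ?_
        simp only [List.count_cons, List.count_append, List.count_nil]
        omega
      have h1 := Submodule.smul_mem _ (-1/2:ℚ) (SS_Cmul hκ _ l2 _ h0)
      have h2 : kf κ p a * (kf κ b q * CC κ l2) - kf κ p b * (kf κ a q * CC κ l2)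
        = (-1/2 : ℚ) • (tr κ a [b, p] q * CC κ l2) := by
        funext ω
        simp only [tr, kf, List.map_cons, List.map_nil, fb_cons, fb_nil, Pi.sub_apply,
          Pi.mul_apply, Pi.smul_apply, brk3 hκ, map_sub, map_smul, LinearMap.sub_apply,
          LinearMap.smul_apply, smul_eq_mul]
        rw [k_symm hκ (b ω) (p ω), k_symm hκ (a ω) (p ω)]
        ring
      rw [h2]; exact h1
  | p :: q :: l1 =>
    simp only [List.cons_append, CC]
    rw [← mul_sub]
    exact SS_kmul hκ p q _ _ (CC_swap l1 a b l2)

theorem CC_perm {L L' : List (Ω → sl2)} (h : L.Perm L') :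
    ∀ M : List (Ω → sl2), CC κ (M ++ L) - CC κ (M ++ L') ∈ SS κ (M ++ L) := by
  induction h with
  | nil => intro M; simp
  | cons x h ih =>
    intro M
    have := ih (M ++ [x])
    simpa using this
  | swap x y l => intro M; exact CC_swap hκ M _ _ _
  | trans h1 h2 ih1 ih2 =>
    intro M
    have h3 := ih2 M
    rw [SS_perm (h1.symm.append_left M)] at h3
    have := Submodule.add_mem _ (ih1 M) h3
    simpa using this

theorem WW_perm {L L' : List (Ω → sl2)} (h : L.Perm L') : WW κ L = WW κ L' := by
  have key : ∀ {L L' : List (Ω → sl2)} (h : L.Perm L'), WW κ L ≤ WW κ L' := by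
    intro L L' h
    unfold WW
    refine sup_le (by rw [SS_perm h]; exact le_sup_left) ?_
    rw [Submodule.span_singleton_le_iff_mem]
    have h1 := CC_perm hκ h []
    simp only [List.nil_append] at h1
    rw [SS_perm h] at h1
    have h2 : CC κ L' ∈ Submodule.span ℚ {CC κ L'} := Submodule.mem_span_singleton_self _
    have := Submodule.add_mem_sup h1 h2
    simpa using this
  exact le_antisymm (key h) (key h.symm)

theorem WW_kmul (u v : Ω → sl2) (L : List (Ω → sl2)) (φ : Ω → ℚ) (hφ : φ ∈ WW κ L) :
    kf κ u v * φ ∈ WW κ (u :: v :: L) := by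
  obtain ⟨s, hs, c, hc, rfl⟩ := Submodule.mem_sup.1 hφ
  obtain ⟨r, rfl⟩ := Submodule.mem_span_singleton.1 hc
  rw [mul_add]
  refine Submodule.add_mem_sup (SS_kmul hκ u v L s hs) ?_
  rw [mul_smul_comm]
  exact Submodule.smul_mem _ _ (Submodule.mem_span_singleton_self _)

theorem WW_cob (u v : Ω → sl2) (L : List (Ω → sl2)) : WW κ (bk u v :: L) ≤ WW κ (u :: v :: L) := by
  refine sup_le ((SS_cob hκ u v L).trans le_sup_left) ?_
  rw [Submodule.span_singleton_le_iff_mem]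
  refine Submodule.mem_sup_left ?_
  match L with
  | [] => simp [CC]
  | b :: L =>
    have h0 : tr κ u [v] b ∈ SS κ [u, v, b] :=
      tr_mem _ _ _ (by simp) ((List.Perm.swap _ _ _).cons _)
    have h1 := SS_Cmul hκ _ L _ h0
    have h2 : kf κ (bk u v) b = tr κ u [v] b := rfl
    simp only [CC, h2]
    simpa only [List.cons_append, List.nil_append] using h1

end treespan

abbrev Form (n : ℕ) : Type := MultilinearMap ℚ (fun _ : Fin n => sl2) ℚ

/-- Invariant multilinear forms. -/
def InvM {n : ℕ} (f : Form n) : Prop :=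
  ∀ (y : sl2) (x : Fin n → sl2), ∑ i, f (Function.update x i ⁅y, x i⁆) = 0

/-- Cons for constant families. -/
def cns {n : ℕ} {A : Type} (u : A) (z : Fin n → A) : Fin (n + 1) → A := Fin.cons u z

theorem invM_cons {n : ℕ} (f : Form (n + 1)) :
    InvM f ↔ ∀ (y u : sl2) (z : Fin n → sl2), f (cns ⁅y, u⁆ z) + ∑ i, f (cns u (Function.update z i ⁅y, z i⁆)) = 0 := by
  constructor
  · intro h y u z
    have := h y (cns u z)
    rw [Fin.sum_univ_succ] at this
    simpa [cns, Fin.update_cons_zero, Fin.cons_update] using this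
  · intro h y x
    have := h y (x 0) (Fin.tail x)
    rw [Fin.sum_univ_succ]
    have h1 : Function.update x 0 ⁅y, x 0⁆ = cns ⁅y, x 0⁆ (Fin.tail x) := by
      funext i
      refine Fin.cases ?_ (fun i => ?_) i
      · simp [cns]
      · simp [cns, Fin.tail]
    have h2 : ∀ i : Fin n, Function.update x i.succ ⁅y, x i.succ⁆ =
        cns (x 0) (Function.update (Fin.tail x) i ⁅y, Fin.tail x i⁆) := by
      intro i
      rw [cns, Fin.cons_update, Fin.cons_self_tail]; rfl
    rw [h1]
    simp only [h2]
    exact this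

/-- Curry the first two variables. -/
def BB {k : ℕ} (f : Form (k + 2)) : sl2 →ₗ[ℚ] sl2 →ₗ[ℚ] Form k :=
  (multilinearCurryLeftEquiv ℚ (fun _ : Fin (k + 1) => sl2) ℚ).toLinearMap ∘ₗ f.curryLeft

theorem BB_apply {k : ℕ} (f : Form (k + 2)) (u v : sl2) (z : Fin k → sl2) :
    BB f u v z = f (cns u (cns v z)) := rfl

/-- Contraction of the first two variables. -/
def hh {k : ℕ} (f : Form (k + 2)) : Form k := ∑ a : Fin 3, coef3 a • BB f (u3 a) (w3 a)

/-- Antisymmetrization of the first two variables. -/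
def gg {k : ℕ} (f : Form (k + 2)) : Form (k + 1) :=
  LinearMap.uncurryLeft
    ((∑ a : Fin 3, coef3 a • (BB f (u3 a) ∘ₗ (LieAlgebra.ad ℚ sl2 (w3 a) : sl2 →ₗ[ℚ] sl2)) :
      sl2 →ₗ[ℚ] Form k))

theorem gg_apply {k : ℕ} (f : Form (k + 2)) (v : sl2) (z : Fin k → sl2) :
    gg f (cns v z) = ∑ a : Fin 3, coef3 a * BB f (u3 a) ⁅w3 a, v⁆ z := by
  simp [gg, cns, LinearMap.uncurryLeft_apply, MultilinearMap.sum_apply]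

theorem hh_apply {k : ℕ} (f : Form (k + 2)) (z : Fin k → sl2) :
    hh f z = ∑ a : Fin 3, coef3 a * BB f (u3 a) (w3 a) z := by
  simp [hh, MultilinearMap.sum_apply]

theorem inv_BB {k : ℕ} {f : Form (k + 2)} (hf : InvM f) (y u v : sl2) (z : Fin k → sl2) :
    ∑ i, BB f u v (Function.update z i ⁅y, z i⁆) = - (BB f ⁅y, u⁆ v z + BB f u ⁅y, v⁆ z) := by
  have h := (invM_cons f).1 hf y u (cns v z)
  rw [Fin.sum_univ_succ] at h
  simp only [BB_apply]
  have h1 : Function.update (cns v z) 0 ⁅y, cns v z 0⁆ = cns ⁅y, v⁆ z := by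
    simp [cns]
  have h2 : ∀ i : Fin k, Function.update (cns v z) i.succ ⁅y, cns v z i.succ⁆ =
      cns v (Function.update z i ⁅y, z i⁆) := by
    intro i
    simp [cns, Fin.cons_update]
  rw [h1] at h
  simp only [h2] at h
  linarith

theorem inv_hh {k : ℕ} {f : Form (k + 2)} (hf : InvM f) : InvM (hh f) := by
  intro y z
  simp only [hh_apply]
  rw [Finset.sum_comm]
  simp only [← Finset.mul_sum, inv_BB hf]
  have := congrArg (fun F : Form k => F z) (cas_inv (BB f) y)
  simp only [MultilinearMap.sum_apply, MultilinearMap.smul_apply, MultilinearMap.add_apply,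
    smul_eq_mul, MultilinearMap.zero_apply] at this
  simp only [mul_neg, Finset.sum_neg_distrib, this, neg_zero]

theorem cas_g {M : Type*} [AddCommGroup M] [Module ℚ M] (B : sl2 →ₗ[ℚ] sl2 →ₗ[ℚ] M)
    (y w : sl2) :
    ∑ a : Fin 3, coef3 a • (B (u3 a) ⁅w3 a, ⁅y, w⁆⁆ - (B ⁅y, u3 a⁆ ⁅w3 a, w⁆ +
      B (u3 a) ⁅y, ⁅w3 a, w⁆⁆)) = 0 := by
  obtain ⟨a, b, c, rfl⟩ := coords y
  obtain ⟨a', b', c', rfl⟩ := coords w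
  simp only [Fin.sum_univ_three, coef3, u3, w3, Matrix.cons_val_zero, Matrix.cons_val_one,
    Matrix.cons_val]
  simp only [map_add, map_smul, LinearMap.add_apply, LinearMap.smul_apply, smul_eq_mul,
    lie_add, add_lie, smul_lie, lie_smul, lie_self, lie_zero, zero_lie, smul_zero,
    lieHE, lieEH, lieHF, lieFH, lieEF, lieFE, map_zero, LinearMap.zero_apply]
  module

theorem inv_gg {k : ℕ} {f : Form (k + 2)} (hf : InvM f) : InvM (gg f) := by
  rw [invM_cons]
  intro y w z
  simp only [gg_apply]
  rw [Finset.sum_comm]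
  simp only [← Finset.mul_sum, inv_BB hf]
  have := congrArg (fun F : Form k => F z) (cas_g (BB f) y w)
  simp only [MultilinearMap.sum_apply, MultilinearMap.smul_apply, MultilinearMap.add_apply,
    MultilinearMap.sub_apply, smul_eq_mul, MultilinearMap.zero_apply] at this
  rw [← Finset.sum_add_distrib, ← this]
  refine Finset.sum_congr rfl fun a _ => ?_
  ring

theorem inv_congr {n : ℕ} {f : Form n} (hf : InvM f) (τ : Equiv.Perm (Fin n)) :
    InvM (f.domDomCongr τ) := by
  intro y x
  simp only [MultilinearMap.domDomCongr_apply]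
  rw [← hf y (fun i => x (τ i)), ← Equiv.sum_comp τ]
  refine Finset.sum_congr rfl fun i _ => ?_
  congr 1
  funext j
  by_cases h : j = i
  · subst h; simp
  · have : τ j ≠ τ i := fun h' => h (τ.injective h')
    simp [Function.update_of_ne, h, this]

section main
variable {Ω : Type} {κ : sl2 →ₗ[ℚ] sl2 →ₗ[ℚ] ℚ} (hκ : IsK κ)
include hκ

theorem ident {k : ℕ} {f : Form (k + 2)} (hf : InvM f) (x : Fin (k + 2) → sl2) :
    ((k : ℚ) + 3) * f x = ∑ j : Fin (k + 1),
      (f x - f (Function.update (Function.update x 0 (x j.succ)) j.succ (x 0))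
        + κ (x 0) (x j.succ) * ∑ a : Fin 3, coef3 a *
          f (Function.update (Function.update x 0 (u3 a)) j.succ (w3 a))) := by
  have h1 : ∀ a : Fin 3, f (Function.update x 0 ⁅u3 a, ⁅w3 a, x 0⁆⁆) +
      ∑ j : Fin (k + 1), f (Function.update (Function.update x 0 ⁅w3 a, x 0⁆) j.succ
        ⁅u3 a, x j.succ⁆) = 0 := by
    intro a
    have := hf (u3 a) (Function.update x 0 ⁅w3 a, x 0⁆)
    rw [Fin.sum_univ_succ] at this
    simpa using this
  have h2 := cas_one (f.toLinearMap x 0) (x 0)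
  have h3 : ∀ j : Fin (k + 1), ∃ B : sl2 →ₗ[ℚ] sl2 →ₗ[ℚ] ℚ, ∀ u v,
      B u v = f (Function.update (Function.update x 0 u) j.succ v) := by
    intro j
    have hne : (0 : Fin (k + 2)) ≠ j.succ := (Fin.succ_ne_zero j).symm
    refine ⟨LinearMap.mk₂ ℚ (fun u v => f (Function.update (Function.update x 0 u) j.succ v))
      ?_ ?_ ?_ ?_, fun u v => rfl⟩
    · intro u u' v
      simp only [Function.update_comm hne, MultilinearMap.map_update_add]
    · intro c u v
      simp only [Function.update_comm hne, MultilinearMap.map_update_smul]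
    · intro u v v'
      simp only [MultilinearMap.map_update_add]
    · intro c u v
      simp only [MultilinearMap.map_update_smul]
  choose B hB using h3
  have h4 : ∀ j : Fin (k + 1), _ := fun j => cas_two hκ (B j) (x 0) (x j.succ)
  simp only [hB, smul_eq_mul] at h4
  simp only [MultilinearMap.toLinearMap_apply, smul_eq_mul, Function.update_eq_self] at h2
  have h5 : ∑ a : Fin 3, coef3 a * (f (Function.update x 0 ⁅u3 a, ⁅w3 a, x 0⁆⁆) +
      ∑ j : Fin (k + 1), f (Function.update (Function.update x 0 ⁅w3 a, x 0⁆) j.succ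
        ⁅u3 a, x j.succ⁆)) = 0 := by simp [h1]
  simp only [mul_add, Finset.sum_add_distrib, Finset.mul_sum] at h5
  rw [Finset.sum_comm (s := Finset.univ (α := Fin 3)), h2] at h5
  simp only [h4] at h5
  rw [← Finset.mul_sum, Finset.sum_sub_distrib] at h5
  rw [Finset.sum_add_distrib, Finset.sum_sub_distrib]
  simp only [Finset.sum_const, Finset.card_univ, Fintype.card_fin, nsmul_eq_mul]
  push_cast
  linarith

theorem stepA {k : ℕ} {f : Form (k + 2)} (hf : InvM f)
    (IH : ∀ g : Form (k + 1), InvM g → ∀ w : Fin (k + 1) → Ω → sl2,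
      (fun ω => g (fun i => w i ω)) ∈ WW κ (List.ofFn w))
    (u v : Ω → sl2) (z : Fin k → Ω → sl2) :
    (fun ω => f (cns (u ω) (cns (v ω) fun i => z i ω)) - f (cns (v ω) (cns (u ω) fun i => z i ω)))
      ∈ WW κ (u :: v :: List.ofFn z) := by
  have h := IH (gg f) (inv_gg hf) (cns (bk u v) z)
  have h0 : List.ofFn (cns (bk u v) z) = bk u v :: List.ofFn z := by
    simp [cns, List.ofFn_succ]
  rw [h0] at h
  have h1 := Submodule.smul_mem _ (1/2 : ℚ) (WW_cob hκ _ _ _ h)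
  convert h1 using 1
  funext ω
  have e : (fun i => cns (bk u v) z i ω) = cns ⁅u ω, v ω⁆ (fun i => z i ω) := by
    funext i
    refine Fin.cases rfl (fun i => rfl) i
  simp only [Pi.smul_apply, e, gg_apply]
  have := congrArg (fun F : Form k => F fun i => z i ω) (cas_anti (BB f) (u ω) (v ω))
  simp only [MultilinearMap.sum_apply, MultilinearMap.smul_apply, 
    MultilinearMap.sub_apply, smul_eq_mul, BB_apply] at this
  simp only [BB_apply, smul_eq_mul]
  exact this

theorem stepB {k : ℕ} {f : Form (k + 2)} (hf : InvM f)
    (IH : ∀ g : Form k, InvM g → ∀ w : Fin k → Ω → sl2,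
      (fun ω => g (fun i => w i ω)) ∈ WW κ (List.ofFn w))
    (u v : Ω → sl2) (z : Fin k → Ω → sl2) :
    (fun ω => κ (u ω) (v ω) * ∑ a : Fin 3, coef3 a * f (cns (u3 a) (cns (w3 a) fun i => z i ω)))
      ∈ WW κ (u :: v :: List.ofFn z) := by
  have h := WW_kmul hκ u v _ _ (IH (hh f) (inv_hh hf) z)
  convert h using 1
  funext ω
  simp only [Pi.mul_apply, kf, hh_apply, BB_apply]

theorem mainW : ∀ (n : ℕ) (f : Form n), InvM f → ∀ w : Fin n → Ω → sl2,
      (fun ω => f (fun i => w i ω)) ∈ WW κ (List.ofFn w)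
  | 0, f, hf, w => by
    refine Submodule.mem_sup_right (Submodule.mem_span_singleton.2 ⟨f (fun i => 0), ?_⟩)
    funext ω
    simp only [List.ofFn_zero, CC, Pi.smul_apply, Pi.one_apply, smul_eq_mul, mul_one]
    congr 1
    funext i; exact i.elim0
  | 1, f, hf, w => by
    have : ∀ x : Fin 1 → sl2, f x = 0 := by
      intro x
      have h2 := cas_one (f.toLinearMap x 0) (x 0)
      simp only [MultilinearMap.toLinearMap_apply, smul_eq_mul, Function.update_eq_self] at h2
      have h3 : ∀ a, f (Function.update x 0 ⁅u3 a, ⁅w3 a, x 0⁆⁆) = 0 := by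
        intro a
        have := hf (u3 a) (Function.update x 0 ⁅w3 a, x 0⁆)
        simpa using this
      simp only [h3, mul_zero, Finset.sum_const_zero] at h2
      linarith
    simp only [this]
    exact Submodule.zero_mem _
  | k + 2, f, hf, w => by
    have IH1 := mainW (k + 1)
    have IH0 := mainW k
    have key : ∀ j : Fin (k + 1), (fun ω => 
        f (fun i => w i ω) - f (Function.update (Function.update (fun i => w i ω) 0 (w j.succ ω)) j.succ (w 0 ω))
        + κ (w 0 ω) (w j.succ ω) * ∑ a : Fin 3, coef3 a *
          f (Function.update (Function.update (fun i => w i ω) 0 (u3 a)) j.succ (w3 a)))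
          ∈ WW κ (List.ofFn w) := by
      intro j
      set τ : Equiv.Perm (Fin (k + 2)) := Equiv.swap 1 j.succ with hτ
      have hne : (0 : Fin (k + 2)) ≠ j.succ := (Fin.succ_ne_zero j).symm
      have hne1 : (0 : Fin (k + 2)) ≠ 1 := by simp
      set z : Fin k → Ω → sl2 := fun i => w (τ i.succ.succ) with hz
      have hF := inv_congr hf τ
      have hA := stepA hκ hF IH1 (w 0) (w j.succ) z
      have hB := stepB hκ hF IH0 (w 0) (w j.succ) z
      have hp : (w 0 :: w j.succ :: List.ofFn z).Perm (List.ofFn w) := by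
        have e : w 0 :: w j.succ :: List.ofFn z = List.ofFn (w ∘ τ) := by
          rw [List.ofFn_succ, List.ofFn_succ]
          congr 1
        rw [e]
        exact Equiv.Perm.ofFn_comp_perm τ w
      rw [WW_perm hκ hp] at hA hB
      have hgen : ∀ (p q : sl2) (ω : Ω), f.domDomCongr τ (cns p (cns q fun i => z i ω)) =
          f (Function.update (Function.update (fun i => w i ω) 0 p) j.succ q) := by
        intro p q ω
        rw [MultilinearMap.domDomCongr_apply]
        congr 1
        have e1 : ∀ i, cns p (cns q fun i => z i ω) i =
            Function.update (Function.update (fun i => w i ω) 0 p) j.succ q (τ i) := by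
          intro i
          refine Fin.cases ?_ (fun i => Fin.cases ?_ (fun i => ?_) i) i
          · rw [hτ, Equiv.swap_apply_of_ne_of_ne hne1 hne, Function.update_of_ne hne]
            simp [cns]
          · change q = _
            have : τ (Fin.succ 0) = j.succ := by simp [hτ]
            rw [this]; simp
          · change w (τ i.succ.succ) ω = _
            have a1 : τ i.succ.succ ≠ j.succ := by
              intro h
              have : i.succ.succ = (1 : Fin (k+2)) := by
                apply τ.injective; rw [h]; simp [hτ]
              simp [Fin.ext_iff] at this
            have a2 : τ i.succ.succ ≠ 0 := by
              intro h
              have : i.succ.succ = (0 : Fin (k+2)) := by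
                apply τ.injective; rw [h, hτ, Equiv.swap_apply_of_ne_of_ne hne1 hne]
              simp [Fin.ext_iff] at this
            rw [Function.update_of_ne a1, Function.update_of_ne a2]
        funext i
        rw [e1]
        simp [hτ]
      have hsum := Submodule.add_mem _ hA hB
      convert hsum using 1
      funext ω
      simp only [Pi.add_apply, hgen]
      congr 3
      have : (fun i => w i ω) = Function.update (Function.update (fun i => w i ω) 0 (w 0 ω)) j.succ (w j.succ ω) := by
        rw [Function.update_eq_self 0 (fun i => w i ω), Function.update_eq_self j.succ (fun i => w i ω)]
      exact this
    have hs := Submodule.smul_mem _ (((k : ℚ) + 3)⁻¹) (Submodule.sum_mem _ fun j (_ : j ∈ Finset.univ) => key j)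
    convert hs using 1
    funext ω
    have hpos : (k : ℚ) + 3 ≠ 0 := by positivity
    have := ident hκ hf (fun i => w i ω)
    simp only [Pi.smul_apply, Finset.sum_apply, smul_eq_mul]
    rw [← this]
    field_simp

end main

/-- Derivation sum over list entries. -/
def dL {M : Type} [AddCommGroup M] (y : sl2) : (List sl2 → M) → List sl2 → M
  | _, [] => 0
  | G, a :: l => G (⁅y, a⁆ :: l) + dL y (fun l' => G (a :: l')) l

theorem dL_ofFn {M : Type} [AddCommGroup M] (y : sl2) : ∀ {n : ℕ} (G : List sl2 → M)
    (x : Fin n → sl2),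
    ∑ i, G (List.ofFn (Function.update x i ⁅y, x i⁆)) = dL y G (List.ofFn x)
  | 0, G, x => by simp [dL]
  | n + 1, G, x => by
    rw [Fin.sum_univ_succ, List.ofFn_succ (f := x), dL, ← dL_ofFn y _ (fun i => x i.succ)]
    congr 1
    · simp [List.ofFn_succ]
    · refine Finset.sum_congr rfl fun i _ => ?_
      rw [List.ofFn_succ]
      congr 2
      congr 1
      funext j
      by_cases h : j = i
      · subst h; simp
      · simp [Function.update_of_ne, h]

theorem dL_snoc {M : Type} [AddCommGroup M] (y b : sl2) : ∀ (l : List sl2) (G : List sl2 → M),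
    dL y G (l ++ [b]) = dL y (fun l' => G (l' ++ [b])) l + G (l ++ [⁅y, b⁆])
  | [], G => by simp [dL]
  | a :: l, G => by
    simp only [List.cons_append, dL, dL_snoc y b l]
    rw [add_assoc]

theorem dL_comp {M N : Type} [AddCommGroup M] [AddCommGroup N] (y : sl2) (φ : M →+ N) :
    ∀ (l : List sl2) (G : List sl2 → M), dL y (fun l => φ (G l)) l = φ (dL y G l)
  | [], G => by simp [dL]
  | a :: l, G => by
    simp only [dL, map_add]
    rw [dL_comp y φ l (fun l' => G (a :: l'))]

theorem dL_fb (y : sl2) : ∀ (l : List sl2) (a : sl2),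
    dL y (fb a) l = ⁅y, fb a l⁆ - fb ⁅y, a⁆ l
  | [], a => by simp [dL, fb_nil]
  | c :: l, a => by
    have h : (fun l' => fb a (c :: l')) = fb ⁅a, c⁆ := rfl
    rw [dL, h, dL_fb y l]
    simp only [fb_cons]
    rw [leibniz_lie y a c, fb_add]
    abel

/-- Value of a linear tree on a list. -/
def bv (κ : sl2 →ₗ[ℚ] sl2 →ₗ[ℚ] ℚ) (L : List sl2) : ℚ := κ (lBrk L.dropLast) (L.getLastD 0)

theorem bv_eq (κ : sl2 →ₗ[ℚ] sl2 →ₗ[ℚ] ℚ) (a : sl2) (l : List sl2) (b : sl2) :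
    bv κ (a :: (l ++ [b])) = κ (fb a l) b := by
  have h1 : (a :: (l ++ [b])).dropLast = a :: l := by
    rw [← List.cons_append, List.dropLast_concat]
  have h2 : (a :: (l ++ [b])).getLastD 0 = b := by
    rw [← List.cons_append, List.getLastD_concat]
  rw [bv, h1, h2]; rfl

theorem brkVal_bv (κ : sl2 →ₗ[ℚ] sl2 →ₗ[ℚ] ℚ) {k : ℕ} (x : Fin k → sl2) :
    brkVal κ x = bv κ (List.ofFn x) := rfl

theorem split_list {A : Type} (L : List A) (h : 2 ≤ L.length) :
    ∃ a l b, L = a :: (l ++ [b]) := by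
  match L, h with
  | a :: c :: l, _ =>
    rcases List.eq_nil_or_concat (c :: l) with h | ⟨l', b, h⟩
    · simp at h
    · exact ⟨a, l', b, by rw [h]; simp⟩

theorem pairT_tprod (κ : sl2 →ₗ[ℚ] sl2 →ₗ[ℚ] ℚ) (n : ℕ) (x v : Fin n → sl2) :
    pairT κ n x (PiTensorProduct.tprod ℚ v) = ∏ i, κ (v i) (x i) := by
  simp [pairT]

theorem exists_form (κ : sl2 →ₗ[ℚ] sl2 →ₗ[ℚ] ℚ) (n : ℕ) (t : TP n) :
    ∃ f : Form n, ∀ x, f x = pairT κ n x t := by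
  induction t using PiTensorProduct.induction_on with
  | smul_tprod r v =>
    refine ⟨r • (MultilinearMap.mkPiAlgebra ℚ (Fin n) ℚ).compLinearMap fun i => κ (v i), ?_⟩
    intro x
    simp [pairT_tprod]
  | add t t' h h' =>
    obtain ⟨f, hf⟩ := h
    obtain ⟨f', hf'⟩ := h'
    exact ⟨f + f', fun x => by simp [hf, hf']⟩

/-- Product of consecutive pairings. -/
def PP (κ : sl2 →ₗ[ℚ] sl2 →ₗ[ℚ] ℚ) (m : ℕ) (x : Fin (2 * m) → sl2) : ℚ :=
  ∏ i : Fin m, κ (x ⟨2 * i.1, by omega⟩) (x ⟨2 * i.1 + 1, by omega⟩)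

theorem PP_succ (κ : sl2 →ₗ[ℚ] sl2 →ₗ[ℚ] ℚ) (m : ℕ) (x : Fin (2 * m + 2) → sl2) :
    PP κ (m + 1) x = κ (x 0) (x 1) * PP κ m (fun i => x i.succ.succ) := by
  unfold PP
  rw [Fin.prod_univ_succ]
  rfl

theorem CC_PP {Ω : Type} (κ : sl2 →ₗ[ℚ] sl2 →ₗ[ℚ] ℚ) (ω : Ω) : ∀ (m : ℕ)
    (w : Fin (2 * m) → Ω → sl2), CC κ (List.ofFn w) ω = PP κ m (fun i => w i ω)
  | 0, w => by simp [PP, CC]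
  | m + 1, w => by
    have h : List.ofFn w = w (0 : Fin (2 * m + 2)) :: w (1 : Fin (2 * m + 2)) ::
        List.ofFn (fun i : Fin (2 * m) => w i.succ.succ) := by
      change List.ofFn (n := 2 * m + 2) w = _
      rw [List.ofFn_succ, List.ofFn_succ]; rfl
    rw [h, CC, Pi.mul_apply, CC_PP κ ω m]
    exact (PP_succ κ m (fun i => w i ω)).symm

theorem prod_two : ∀ (m : ℕ) (G : Fin (2 * m) → ℚ),
    ∏ j, G j = ∏ i : Fin m, (G ⟨2 * i.1, by omega⟩ * G ⟨2 * i.1 + 1, by omega⟩)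
  | 0, G => by simp
  | m + 1, G => by
    have h : ∏ j, G j = G (0 : Fin (2 * m + 2)) * (G (1 : Fin (2 * m + 2)) *
        ∏ i : Fin (2 * m), G i.succ.succ) := by
      change ∏ j : Fin (2 * m + 2), G j = _
      rw [Fin.prod_univ_succ, Fin.prod_univ_succ]; rfl
    rw [h, prod_two m, Fin.prod_univ_succ, ← mul_assoc]
    rfl

section final
variable {κ : sl2 →ₗ[ℚ] sl2 →ₗ[ℚ] ℚ} (hκ : IsK κ)
include hκ

theorem k_skew (y v x : sl2) : κ ⁅y, v⁆ x = - κ v ⁅y, x⁆ := by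
  rw [← lie_skew, map_neg, LinearMap.neg_apply, k_inv hκ]

theorem bv_inv (y : sl2) (L : List sl2) (h : 2 ≤ L.length) : dL y (bv κ) L = 0 := by
  obtain ⟨a, l, b, rfl⟩ := split_list L h
  rw [dL, dL_snoc]
  simp only [bv_eq]
  have h1 := dL_comp y ((κ.flip b).toAddMonoidHom) l (fb a)
  simp only [LinearMap.toAddMonoidHom_coe, LinearMap.flip_apply] at h1
  rw [h1, dL_fb, map_sub, LinearMap.sub_apply, k_skew hκ y]
  ring

theorem PP_inv (y : sl2) : ∀ (m : ℕ) (x : Fin (2 * m) → sl2),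
    ∑ i, PP κ m (Function.update x i ⁅y, x i⁆) = 0
  | 0, x => by simp
  | m + 1, x => by
    change ∑ i : Fin (2 * m + 2), _ = _
    have hx : ∀ x' : Fin (2 * (m + 1)) → sl2, PP κ (m + 1) x' = _ := PP_succ κ m
    rw [Fin.sum_univ_succ, Fin.sum_univ_succ]
    have e0 : PP κ (m + 1) (Function.update x (0 : Fin (2 * m + 2)) ⁅y, x (0 : Fin (2 * m + 2))⁆) =
        κ ⁅y, x (0 : Fin (2 * m + 2))⁆ (x (1 : Fin (2 * m + 2))) * PP κ m (fun i => x i.succ.succ) := by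
      rw [hx]; rfl
    have e1 : PP κ (m + 1) (Function.update x (Fin.succ 0 : Fin (2 * m + 2))
        ⁅y, x (Fin.succ 0 : Fin (2 * m + 2))⁆) =
        κ (x (0 : Fin (2 * m + 2))) ⁅y, x (1 : Fin (2 * m + 2))⁆ * PP κ m (fun i => x i.succ.succ) := by
      rw [hx]; rfl
    have e2 : ∀ i : Fin (2 * m), PP κ (m + 1) (Function.update x (i.succ.succ : Fin (2 * m + 2))
        ⁅y, x (i.succ.succ : Fin (2 * m + 2))⁆) =
        κ (x (0 : Fin (2 * m + 2))) (x (1 : Fin (2 * m + 2))) *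
          PP κ m (Function.update (fun i => x i.succ.succ) i ⁅y, x i.succ.succ⁆) := by
      intro i
      rw [hx]
      congr 2
      funext j
      by_cases h : j = i
      · subst h; simp
      · rw [Function.update_of_ne h, Function.update_of_ne]
        simpa using h
    rw [e0, e1]
    simp only [e2]
    have ih := PP_inv y m (fun i => x i.succ.succ)
    rw [← Finset.mul_sum, ih, k_skew hκ y]
    ring

theorem pairT_act (n : ℕ) (y : sl2) (x : Fin n → sl2) (t : TP n) :
    pairT κ n x (actOn n y t) = - ∑ i, pairT κ n (Function.update x i ⁅y, x i⁆) t := by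
  induction t using PiTensorProduct.induction_on with
  | smul_tprod r v =>
    simp only [map_smul, ← Finset.smul_sum, ← smul_neg]
    congr 1
    simp only [actOn, LinearMap.sum_apply, map_sum, PiTensorProduct.map_tprod, pairT_tprod]
    rw [← Finset.sum_neg_distrib]
    refine Finset.sum_congr rfl fun i _ => ?_
    rw [← Finset.mul_prod_erase _ _ (Finset.mem_univ i), ← Finset.mul_prod_erase _ _ (Finset.mem_univ i)]
    rw [← neg_mul]
    congr 1
    · simp [k_skew hκ y]
    · refine Finset.prod_congr rfl fun j hj => ?_
      have : j ≠ i := Finset.ne_of_mem_erase hj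
      simp [this]
  | add t t' h h' =>
    simp only [map_add, h, h', Finset.sum_add_distrib]
    ring

theorem expand (n : ℕ) (t : TP n) : t = ∑ g : Fin n → Fin 3,
    pairT κ n (fun i => w3 (g i)) t • PiTensorProduct.tprod ℚ (fun i => coef3 (g i) • u3 (g i)) := by
  induction t using PiTensorProduct.induction_on with
  | smul_tprod r v =>
    simp only [map_smul, pairT_tprod, smul_assoc, ← Finset.smul_sum]
    congr 1
    conv_lhs => rw [show v = fun i => ∑ a : Fin 3, κ (v i) (w3 a) • coef3 a • u3 a from
      funext fun i => dual_expand hκ (v i)]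
    rw [MultilinearMap.map_sum]
    refine Finset.sum_congr rfl fun g _ => ?_
    rw [MultilinearMap.map_smul_univ]
  | add t t' h h' =>
    conv_lhs => rw [h, h']
    simp only [map_add, add_smul, Finset.sum_add_distrib]

theorem pair_ext (n : ℕ) (t t' : TP n) (h : ∀ x, pairT κ n x t = pairT κ n x t') : t = t' := by
  rw [expand hκ n t, expand hκ n t']
  simp only [h]

theorem mem_inv (n : ℕ) (t : TP n) : t ∈ Invariants n ↔
    ∀ (y : sl2) (x : Fin n → sl2), ∑ i, pairT κ n (Function.update x i ⁅y, x i⁆) t = 0 := by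
  simp only [Invariants, Submodule.mem_iInf, LinearMap.mem_ker]
  refine forall_congr' fun y => ?_
  constructor
  · intro h x
    have := pairT_act hκ n y x t
    rw [h, map_zero] at this
    linarith
  · intro h
    refine pair_ext hκ n _ _ fun x => ?_
    rw [pairT_act hκ, h, map_zero, neg_zero]

theorem pairT_cPow (m : ℕ) (x : Fin (2 * m) → sl2) : pairT κ (2 * m) x (cPow m) = PP κ m x := by
  simp only [cPow, map_sum, map_smul, pairT_tprod, smul_eq_mul]
  simp only [prod_two m]
  have e : ∀ i : Fin m, (2 * i.1 + 1) / 2 = i.1 := fun i => by omega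
  have e' : ∀ i : Fin m, ¬ ((2 * i.1 + 1) % 2 = 0) := fun i => by omega
  have e2 : ∀ i : Fin m, (2 * i.1) / 2 = i.1 := fun i => by omega
  have e2' : ∀ i : Fin m, ((2 * i.1) % 2 = 0) := fun i => by omega
  simp only [e, e', e2, e2', if_true, if_false, Fin.eta, ← Finset.prod_mul_distrib]
  rw [PP]
  simp only [← k_cas hκ (x _) (x _)]
  rw [Finset.prod_univ_sum]
  simp

end final

theorem exists_perm_of_perm {n : ℕ} {A : Type} (w : Fin n → A) (L : List A)
    (h : L.Perm (List.ofFn w)) : ∃ σ : Equiv.Perm (Fin n), L = List.ofFn (w ∘ σ) := by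
  rw [List.ofFn_eq_map] at h
  have h' : Relation.Comp (· = List.map w ·) (List.Perm) L (List.finRange n) := by
    rw [List.eq_map_comp_perm]; exact h
  obtain ⟨l, rfl, hl⟩ := h'
  have hlen : l.length = n := by simpa using hl.length_eq
  have hnd : l.Nodup := hl.nodup_iff.2 (List.nodup_finRange n)
  have hinj : Function.Injective (fun i : Fin n => l.get (Fin.cast hlen.symm i)) := by
    intro i j hij
    have := List.nodup_iff_injective_get.1 hnd hij
    simpa using this
  refine ⟨Equiv.ofBijective _ (Finite.injective_iff_bijective.1 hinj), ?_⟩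
  refine List.ext_get (by simp [hlen]) ?_
  intro i h1 h2
  simp

theorem span_linear_tree_tensors_codim_one_of_even
    (κ : sl2 →ₗ[ℚ] sl2 →ₗ[ℚ] ℚ)
    (hHH : κ H H = 2) (hEF : κ E F = 1) (hFE : κ F E = 1)
    (hHE : κ H E = 0) (hEH : κ E H = 0) (hHF : κ H F = 0) (hFH : κ F H = 0)
    (hEE : κ E E = 0) (hFF : κ F F = 0) :
    ∀ m, 2 ≤ m →
    ∀ t : Equiv.Perm (Fin (2 * m)) → TP (2 * m),
      (∀ σ (x : Fin (2 * m) → sl2), pairT κ (2 * m) x (t σ) = brkVal κ (x ∘ σ)) →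
      Submodule.span ℚ (Set.range t) ≤ Invariants (2 * m) ∧
      Module.finrank ℚ (Invariants (2 * m))
        = Module.finrank ℚ (Submodule.span ℚ (Set.range t)) + 1 ∧
      Submodule.span ℚ (Set.range t) ⊔ Submodule.span ℚ {cPow m}
        = Invariants (2 * m) ∧
      Submodule.span ℚ (Set.range t) ⊓ Submodule.span ℚ {cPow m} = ⊥ ∧
      cPow m ∉ Submodule.span ℚ (Set.range t) := by
  intro m hm t ht
  have hκ : IsK κ := ⟨hHH, hEF, hFE, hHE, hEH, hHF, hFH, hEE, hFF⟩
  have hS : Submodule.span ℚ (Set.range t) ≤ Invariants (2 * m) := by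
    refine Submodule.span_le.2 ?_
    rintro _ ⟨σ, rfl⟩
    rw [SetLike.mem_coe, mem_inv hκ]
    intro y x
    simp only [ht]
    rw [← Equiv.sum_comp σ]
    have e : ∀ j, Function.update x (σ j) ⁅y, x (σ j)⁆ ∘ σ =
        Function.update (x ∘ σ) j ⁅y, (x ∘ σ) j⁆ := fun j =>
      Function.update_comp_eq_of_injective _ σ.injective _ _
    simp only [e, brkVal_bv]
    rw [dL_ofFn y (bv κ) (x ∘ σ)]
    exact bv_inv hκ y _ (by simp; omega)
  have hc : cPow m ∈ Invariants (2 * m) := by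
    rw [mem_inv hκ]
    intro y x
    simp only [pairT_cPow hκ]
    exact PP_inv hκ y m x
  have hnot : cPow m ∉ Submodule.span ℚ (Set.range t) := by
    intro h
    have hle : Submodule.span ℚ (Set.range t) ≤ LinearMap.ker (pairT κ (2 * m) (fun _ => H)) := by
      refine Submodule.span_le.2 ?_
      rintro _ ⟨σ, rfl⟩
      rw [SetLike.mem_coe, LinearMap.mem_ker, ht, brkVal_bv]
      have e : List.ofFn ((fun _ => H) ∘ σ) = List.replicate (2 * m) H := by
        simp [Function.comp_def]
      obtain ⟨q, hq⟩ : ∃ q, 2 * m = q + 1 + 1 + 1 := ⟨2 * m - 3, by omega⟩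
      rw [e, hq, List.replicate_succ, List.replicate_succ', List.replicate_succ, bv_eq, fb_cons,
        lie_self]
      have := fb_smul (List.replicate q H) 0 0
      rw [zero_smul, zero_smul] at this
      rw [this]; simp
    have h1 := hle h
    rw [LinearMap.mem_ker, pairT_cPow hκ] at h1
    simp [PP, hHH] at h1
  have hinf : Submodule.span ℚ (Set.range t) ⊓ Submodule.span ℚ {cPow m} = ⊥ := by
    rw [Submodule.eq_bot_iff]
    rintro z ⟨h1, h2⟩
    obtain ⟨r, rfl⟩ := Submodule.mem_span_singleton.1 h2
    by_cases hr : r = 0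
    · simp [hr]
    · exact absurd (by simpa [smul_smul, hr] using Submodule.smul_mem _ r⁻¹ h1) hnot
  have hsup : Submodule.span ℚ (Set.range t) ⊔ Submodule.span ℚ {cPow m} = Invariants (2 * m) := by
    refine le_antisymm (sup_le hS ((Submodule.span_singleton_le_iff_mem _ _).2 hc)) ?_
    intro z hz
    set Ψ : TP (2 * m) →ₗ[ℚ] ((Fin (2 * m) → sl2) → ℚ) := LinearMap.pi fun x => pairT κ (2 * m) x
      with hΨ
    obtain ⟨f, hf⟩ := exists_form κ (2 * m) z
    have hfi : InvM f := by
      intro y x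
      simp only [hf]
      exact (mem_inv hκ _ _).1 hz y x
    set w : Fin (2 * m) → (Fin (2 * m) → sl2) → sl2 := fun i x => x i with hw
    have hmem := mainW hκ (2 * m) f hfi w
    have hle : WW κ (List.ofFn w) ≤ Submodule.map Ψ
        (Submodule.span ℚ (Set.range t) ⊔ Submodule.span ℚ {cPow m}) := by
      refine sup_le (Submodule.span_le.2 ?_) ((Submodule.span_singleton_le_iff_mem _ _).2 ?_)
      · rintro _ ⟨a, b, l, hl, hp, rfl⟩
        have hp' : (a :: (l ++ [b])).Perm (List.ofFn w) := by
          refine List.Perm.trans ?_ hp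
          exact (List.perm_append_comm (l₁ := l) (l₂ := [b])).cons a
        obtain ⟨σ, hσ⟩ := exists_perm_of_perm w _ hp'
        refine ⟨t σ, Submodule.mem_sup_left (Submodule.subset_span ⟨σ, rfl⟩), ?_⟩
        funext x
        have e : List.ofFn (x ∘ σ) = a x :: (l.map (fun g => g x) ++ [b x]) := by
          have := congrArg (List.map (fun g => g x)) hσ
          simp only [List.map_cons, List.map_append, List.map_nil, List.map_ofFn] at this
          rw [this]; rfl
        simp only [hΨ, LinearMap.pi_apply, ht, brkVal_bv, e, bv_eq, tr]
      · refine ⟨cPow m, Submodule.mem_sup_right (Submodule.mem_span_singleton_self _), ?_⟩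
        funext x
        simp only [hΨ, LinearMap.pi_apply]
        rw [pairT_cPow hκ, CC_PP]
    obtain ⟨s, hs, hs'⟩ := hle hmem
    have : s = z := by
      refine pair_ext hκ _ _ _ fun x => ?_
      have := congrFun hs' x
      simp only [hΨ, LinearMap.pi_apply] at this
      rw [this, hf]
    exact this ▸ hs
  refine ⟨hS, ?_, hsup, hinf, hnot⟩
  have hne : cPow m ≠ 0 := fun h => hnot (h ▸ Submodule.zero_mem _)
  haveI : FiniteDimensional ℚ (Submodule.span ℚ (Set.range t)) :=
    FiniteDimensional.span_of_finite ℚ (Set.finite_range t)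
  have hd := Submodule.finrank_sup_add_finrank_inf_eq (Submodule.span ℚ (Set.range t))
    (Submodule.span ℚ {cPow m})
  rw [hsup, hinf, finrank_bot, finrank_span_singleton hne] at hd
  simpa using hd
end
end

section
/- Let n ≥ 2 and let P be any set partition of {1,…,n} (not necessarily non-crossing) all of whose blocks have at least two elements, such that at least one block of P has three or more elements. Then the tensor T_P lies in the ℚ-linear span of {t_σ : σ ∈ Sₙ}. (This is the concrete form of the lemma: the weight system value of any labeled tree diagram with at least one trivalent vertex lies in the image of the weight system on connected trees.) -/
/- Let P be any set partition of {1,…,n} whose blocks all have ≥ 2 elements,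
   with at least one block of ≥ 3 elements.  Then the tensor T_P (placing the
   factors of the κ-dual t_k of the iterated-bracket form at the positions of
   each block, in increasing order) lies in the ℚ-span of the tensors t_σ
   (σ ∈ Sₙ).  κ, T_P and the family t are quantified via their defining
   (κ-contraction) properties. -/

open scoped TensorProduct

set_option synthInstance.maxHeartbeats 1000000
set_option maxHeartbeats 1000000

noncomputable section

/-- For a block `B = {j₁ < ⋯ < j_k}`: `κ([[⋯[x_{j₁},x_{j₂}],⋯],x_{j_{k−1}}], x_{j_k})`. -/
def blockVal (κ : sl2 →ₗ[ℚ] sl2 →ₗ[ℚ] ℚ) {n : ℕ} (x : Fin n → sl2)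
    (B : Finset (Fin n)) : ℚ :=
  κ (lBrk (((B.sort (· ≤ ·)).map x).dropLast)) (((B.sort (· ≤ ·)).map x).getLastD 0)

/-- `P` is a set partition of `Fin n` all of whose blocks have ≥ 2 elements. -/
def IsPartitionGe2 (n : ℕ) (P : Finset (Finset (Fin n))) : Prop :=
  (∀ i : Fin n, ∃! B, B ∈ P ∧ i ∈ B) ∧ (∀ B ∈ P, 2 ≤ B.card)


lemma sl2_ext {a b : sl2} (h : a.1 = b.1) : a = b := Subtype.ext h

lemma sl2_decomp (a : sl2) : a = (a.1 0 0) • H + (a.1 0 1) • E + (a.1 1 0) • F := by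
  have ht : a.1 0 0 + a.1 1 1 = 0 := by
    have := a.2
    have h2 : Matrix.trace a.1 = 0 := (LinearMap.mem_ker).1 this
    simpa [Matrix.trace_fin_two] using h2
  have h11 : a.1 1 1 = - a.1 0 0 := by linarith
  apply sl2_ext
  ext i j
  fin_cases i <;> fin_cases j <;> simp [H, E, F, h11]

lemma sl2_brk (a b : sl2) : (⁅a, b⁆ : sl2).1 = a.1 * b.1 - b.1 * a.1 := rfl

def IsTr (κ : sl2 →ₗ[ℚ] sl2 →ₗ[ℚ] ℚ) : Prop := ∀ a b : sl2, κ a b =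
  2 * (a.1 0 0 * b.1 0 0) + a.1 0 1 * b.1 1 0 + a.1 1 0 * b.1 0 1

lemma isTr (κ : sl2 →ₗ[ℚ] sl2 →ₗ[ℚ] ℚ)
    (hHH : κ H H = 2) (hEF : κ E F = 1) (hFE : κ F E = 1)
    (hHE : κ H E = 0) (hEH : κ E H = 0) (hHF : κ H F = 0) (hFH : κ F H = 0)
    (hEE : κ E E = 0) (hFF : κ F F = 0) : IsTr κ := by
  intro a b
  conv_lhs => rw [sl2_decomp a, sl2_decomp b]
  simp only [map_add, map_smul, LinearMap.add_apply, LinearMap.smul_apply, smul_eq_mul,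
    hHH, hEF, hFE, hHE, hEH, hHF, hFH, hEE, hFF]
  ring

lemma tr11 (a : sl2) : a.1 1 1 = - a.1 0 0 := by
  have h2 : Matrix.trace a.1 = 0 := (LinearMap.mem_ker).1 a.2
  rw [Matrix.trace_fin_two] at h2
  linarith

lemma b00 (a b : sl2) : (⁅a, b⁆ : sl2).1 0 0 = a.1 0 1 * b.1 1 0 - b.1 0 1 * a.1 1 0 := by
  rw [sl2_brk]; simp [Matrix.mul_apply, Fin.sum_univ_two]; ring
lemma b01 (a b : sl2) : (⁅a, b⁆ : sl2).1 0 1 = 2 * (a.1 0 0 * b.1 0 1 - b.1 0 0 * a.1 0 1) := by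
  rw [sl2_brk]; simp [Matrix.mul_apply, Fin.sum_univ_two, tr11]; ring
lemma b10 (a b : sl2) : (⁅a, b⁆ : sl2).1 1 0 = 2 * (a.1 1 0 * b.1 0 0 - b.1 1 0 * a.1 0 0) := by
  rw [sl2_brk]; simp [Matrix.mul_apply, Fin.sum_univ_two, tr11]; ring

lemma swap_id {κ : sl2 →ₗ[ℚ] sl2 →ₗ[ℚ] ℚ} (h : IsTr κ) (z w c b : sl2) :
    κ z b * κ w c = 1/2 * κ ⁅⁅z, w⁆, c⁆ b + κ z c * κ w b := by
  simp only [h _ _, b00, b01, b10]; ring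

lemma anti_id {κ : sl2 →ₗ[ℚ] sl2 →ₗ[ℚ] ℚ} (h : IsTr κ) (u a b : sl2) :
    κ ⁅u, a⁆ b = - κ ⁅u, b⁆ a := by
  simp only [h _ _, b00, b01, b10]; ring

lemma merge_id {κ : sl2 →ₗ[ℚ] sl2 →ₗ[ℚ] ℚ} (h : IsTr κ) (u a b w c : sl2) :
    κ ⁅u, a⁆ b * κ w c = 1/4 * κ ⁅⁅⁅u, a⁆, w⁆, c⁆ b - 1/4 * κ ⁅⁅⁅u, c⁆, w⁆, b⁆ a
      + 1/4 * κ ⁅⁅⁅u, b⁆, w⁆, a⁆ c := by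
  have h1 := swap_id h ⁅u, a⁆ w c b
  have h2 := swap_id h ⁅u, c⁆ w b a
  have h3 := swap_id h ⁅u, b⁆ w a c
  have e1 := anti_id h u a b
  have e2 := anti_id h u a c
  have e3 := anti_id h u b c
  rw [e1] at h1 ⊢; rw [e2] at h1; rw [e3] at h3
  linarith

lemma lBrk_append_singleton (p : List sl2) (hp : p ≠ []) (y : sl2) :
    lBrk (p ++ [y]) = ⁅lBrk p, y⁆ := by
  cases p with
  | nil => exact absurd rfl hp
  | cons a l => simp [lBrk]

lemma lBrk_append (p : List sl2) (hp : p ≠ []) (s : List sl2) :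
    lBrk (p ++ s) = s.foldl (fun y z => ⁅y, z⁆) (lBrk p) := by
  cases p with
  | nil => exact absurd rfl hp
  | cons a l => simp [lBrk]

lemma foldl_sub (s : List sl2) (a b : sl2) :
    s.foldl (fun y z => ⁅y, z⁆) (a - b) =
      s.foldl (fun y z => ⁅y, z⁆) a - s.foldl (fun y z => ⁅y, z⁆) b := by
  induction s generalizing a b with
  | nil => rfl
  | cons c s ih => simp only [List.foldl_cons, sub_lie, ih]

/-- span of connected functions with leaves `M` -/
def Sp (κ : sl2 →ₗ[ℚ] sl2 →ₗ[ℚ] ℚ) {n : ℕ} (M : Multiset (Fin n)) :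
    Submodule ℚ ((Fin n → sl2) → ℚ) :=
  Submodule.span ℚ {f | ∃ (p : List (Fin n)) (b : Fin n), ((p ++ [b] : List (Fin n)) : Multiset (Fin n)) = M ∧
    f = fun x => κ (lBrk (p.map x)) (x b)}

lemma expand_mem (κ : sl2 →ₗ[ℚ] sl2 →ₗ[ℚ] ℚ) {n : ℕ} (b : Fin n) (q : List (Fin n)) :
    ∀ (p s : List (Fin n)) (M : Multiset (Fin n)), p ≠ [] → q ≠ [] →
    ((p ++ q ++ s ++ [b] : List (Fin n)) : Multiset (Fin n)) = M →
    (fun x : Fin n → sl2 => κ ((s.map x).foldl (fun y z => ⁅y, z⁆)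
      ⁅lBrk (p.map x), lBrk (q.map x)⁆) (x b)) ∈ Sp κ M := by
  induction q using List.reverseRecOn with
  | nil => intro p s M _ h; exact absurd rfl h
  | append_singleton q y ih =>
    intro p s M hp _ hM
    by_cases hq : q = []
    · subst hq
      apply Submodule.subset_span
      refine ⟨p ++ [y] ++ s, b, by simpa using hM, ?_⟩
      funext x
      rw [List.map_append (l₁ := p ++ [y]), lBrk_append ((p ++ [y]).map x) (by simp),
        List.map_append (l₁ := p), List.map_singleton,
        lBrk_append_singleton (p.map x) (by simpa using hp)]
      rfl
    · have h1 := ih p (y :: s) M hp hq (by rw [← hM]; simp)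
      have h2 := ih (p ++ [y]) s M (by simp) hq (by
        rw [← hM, Multiset.coe_eq_coe]
        simp only [List.append_assoc]
        refine List.Perm.append_left p ?_
        simp only [← List.append_assoc]
        exact ((List.perm_append_comm).append_right s).append_right [b])
      convert Submodule.sub_mem _ h1 h2 using 1
      funext x
      rw [List.map_append, List.map_singleton, lBrk_append_singleton _ (by simpa using hq)]
      simp only [Pi.sub_apply, List.map_cons, List.foldl_cons, List.map_append, List.map_nil]
      rw [lBrk_append_singleton _ (by simpa using hp), ← LinearMap.sub_apply, ← map_sub, ← foldl_sub]
      congr 3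
      rw [leibniz_lie, lie_lie, ← lie_skew (lBrk (q.map x)) ⁅lBrk (p.map x), x y⁆, lie_lie]
      abel

lemma merge_gen {κ : sl2 →ₗ[ℚ] sl2 →ₗ[ℚ] ℚ} (h : IsTr κ) {n : ℕ} (u w : List (Fin n)) (a b c : Fin n)
    (hu : u ≠ []) (hw : w ≠ []) (M : Multiset (Fin n))
    (hM : ((u ++ [a] ++ [b] ++ (w ++ [c]) : List (Fin n)) : Multiset (Fin n)) = M) :
    (fun x : Fin n → sl2 => κ (lBrk ((u ++ [a]).map x)) (x b) * κ (lBrk (w.map x)) (x c)) ∈ Sp κ M := by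
  have key : ∀ a' b' c' : Fin n,
      ((u ++ [a'] ++ w ++ [c'] ++ [b'] : List (Fin n)) : Multiset (Fin n)) = M →
      (fun x : Fin n → sl2 => κ ⁅⁅⁅lBrk (u.map x), x a'⁆, lBrk (w.map x)⁆, x c'⁆ (x b')) ∈ Sp κ M := by
    intro a' b' c' hM'
    convert expand_mem κ b' w (u ++ [a']) [c'] M (by simp) hw hM' using 1
    funext x
    rw [List.map_append, List.map_singleton, lBrk_append_singleton _ (by simpa using hu)]
    rfl
  have perm : ∀ a' b' c' : Fin n, ((u ++ [a'] ++ w ++ [c'] ++ [b'] : List (Fin n)) : Multiset (Fin n))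
      = (u : Multiset (Fin n)) + w + {a'} + {b'} + {c'} := by
    intro a' b' c'
    simp only [← Multiset.coe_add, Multiset.coe_singleton]
    abel
  have hM2 : (u : Multiset (Fin n)) + w + {a} + {b} + {c} = M := by
    rw [← hM]
    simp only [← Multiset.coe_add, Multiset.coe_singleton]
    abel
  have k1 := key a b c (by rw [perm, hM2])
  have k2 := key c a b (by rw [perm, ← hM2]; abel)
  have k3 := key b c a (by rw [perm, ← hM2]; abel)
  convert Submodule.add_mem _ (Submodule.sub_mem _ (Submodule.smul_mem _ (1/4 : ℚ) k1)
    (Submodule.smul_mem _ (1/4 : ℚ) k2)) (Submodule.smul_mem _ (1/4 : ℚ) k3) using 1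
  funext x
  rw [List.map_append, List.map_singleton, lBrk_append_singleton _ (by simpa using hu), merge_id h]
  simp only [Pi.add_apply, Pi.sub_apply, Pi.smul_apply, smul_eq_mul]

lemma merge {κ : sl2 →ₗ[ℚ] sl2 →ₗ[ℚ] ℚ} (h : IsTr κ) {n : ℕ} (L M : Multiset (Fin n))
    (hL : 3 ≤ L.card) (hM : 2 ≤ M.card) (f g : (Fin n → sl2) → ℚ) (hf : f ∈ Sp κ L)
    (hg : g ∈ Sp κ M) : f * g ∈ Sp κ (L + M) := by
  have h1 := Submodule.mul_mem_mul hf hg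
  rw [Sp, Sp, Submodule.span_mul_span] at h1
  refine Submodule.span_le.2 ?_ h1
  rintro _ ⟨_, ⟨p, b, hp, rfl⟩, _, ⟨w, c, hw, rfl⟩, rfl⟩
  rcases List.eq_nil_or_concat' p with rfl | ⟨u, a, rfl⟩
  · subst hp; simp at hL
  · refine merge_gen h u w a b c ?_ ?_ _ ?_
    · rintro rfl; subst hp; simp at hL
    · rintro rfl; subst hw; simp at hM
    · rw [← hp, ← hw]; rfl

lemma blockVal_mem (κ : sl2 →ₗ[ℚ] sl2 →ₗ[ℚ] ℚ) {n : ℕ} (B : Finset (Fin n)) (hB : 2 ≤ B.card) :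
    (fun x => blockVal κ x B) ∈ Sp κ B.val := by
  have hs : ((B.sort (· ≤ ·) : List (Fin n)) : Multiset (Fin n)) = B.val := Finset.sort_eq _ _
  apply Submodule.subset_span
  unfold blockVal
  generalize B.sort (· ≤ ·) = l at *
  rcases List.eq_nil_or_concat' l with rfl | ⟨u, a, rfl⟩
  · rw [Finset.card_def, ← hs] at hB; simp at hB
  · refine ⟨u, a, hs, ?_⟩
    funext x
    simp [List.getLastD_eq_getLast?]

lemma blocks_prod_mem {κ : sl2 →ₗ[ℚ] sl2 →ₗ[ℚ] ℚ} (h : IsTr κ) {n : ℕ} (L : Multiset (Fin n))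
    (hL : 3 ≤ L.card) (f : (Fin n → sl2) → ℚ) (hf : f ∈ Sp κ L)
    (Q : Finset (Finset (Fin n))) (hQ : ∀ B ∈ Q, 2 ≤ B.card) :
    (f * fun x => ∏ B ∈ Q, blockVal κ x B) ∈ Sp κ (L + ∑ B ∈ Q, B.val) := by
  induction Q using Finset.induction_on with
  | empty => 
    convert hf using 1
    · simp
    · funext x; simp
  | insert B Q hBQ ih =>
    have h1 := ih (fun B' h' => hQ B' (Finset.mem_insert_of_mem h'))
    have hB := hQ B (Finset.mem_insert_self _ _)
    have h2 := merge h _ _ (by rw [Multiset.card_add]; omega) hB _ _ h1 (blockVal_mem κ B hB)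
    convert h2 using 1
    · rw [Finset.sum_insert hBQ]; congr 1; abel
    · funext x; simp [Finset.prod_insert hBQ]; ring

lemma partition_sum {n : ℕ} (P : Finset (Finset (Fin n))) (hP : ∀ i : Fin n, ∃! B, B ∈ P ∧ i ∈ B) :
    ∑ B ∈ P, B.val = (Finset.univ : Finset (Fin n)).val := by
  ext i
  rw [Multiset.count_sum']
  obtain ⟨B, ⟨hB, hi⟩, hu⟩ := hP i
  rw [Finset.sum_eq_single B]
  · rw [Multiset.count_eq_one_of_mem B.nodup hi, Multiset.count_eq_one_of_mem (Finset.nodup _) (Finset.mem_univ i)]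
  · intro B' h' hne
    rw [Multiset.count_eq_zero]
    intro hi'
    exact hne (hu B' ⟨h', hi'⟩)
  · intro h'; exact absurd hB h'

lemma gen_perm (κ : sl2 →ₗ[ℚ] sl2 →ₗ[ℚ] ℚ) {n : ℕ} (p : List (Fin n)) (b : Fin n)
    (h : ((p ++ [b] : List (Fin n)) : Multiset (Fin n)) = (Finset.univ : Finset (Fin n)).val) :
    ∃ σ : Equiv.Perm (Fin n), ∀ x : Fin n → sl2,
      κ (lBrk (p.map x)) (x b) = brkVal κ (x ∘ σ) := by
  generalize hl : p ++ [b] = l at h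
  have hn : l.Nodup := by
    rw [← Multiset.coe_nodup, h]; exact Finset.nodup _
  have hlen : l.length = n := by
    rw [← Multiset.coe_card, h]; simp
  let g : Fin n → Fin n := fun i => l.get (i.cast hlen.symm)
  have hg : Function.Injective g := by
    intro i j hij
    have := (List.nodup_iff_injective_get.1 hn) hij
    simpa [Fin.ext_iff] using this
  refine ⟨Equiv.ofBijective g (Finite.injective_iff_bijective.1 hg), fun x => ?_⟩
  have : List.ofFn (x ∘ g) = l.map x := by
    apply List.ext_get
    · simp [hlen]
    · intro i h1 h2; simp [g]
  unfold brkVal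
  simp only [Equiv.coe_ofBijective]
  rw [this, ← hl]
  simp [List.getLastD_eq_getLast?]

def Phi (κ : sl2 →ₗ[ℚ] sl2 →ₗ[ℚ] ℚ) (n : ℕ) : TP n →ₗ[ℚ] ((Fin n → sl2) → ℚ) :=
  LinearMap.pi (fun x => pairT κ n x)

def dualE : Fin 3 → sl2 := ![(1/2 : ℚ) • H, F, E]
def basE : Fin 3 → sl2 := ![H, E, F]

lemma sl2_li : LinearIndependent ℚ basE := by
  rw [Fintype.linearIndependent_iff]
  intro g hg
  rw [Fin.sum_univ_three] at hg
  have e := congrArg Subtype.val hg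
  have e0 := congrFun (congrFun e 0) 0
  have e1 := congrFun (congrFun e 0) 1
  have e2 := congrFun (congrFun e 1) 0
  simp [basE, H, E, F] at e0 e1 e2
  intro i
  fin_cases i <;> simp [e0, e1, e2]

lemma sl2_span : ⊤ ≤ Submodule.span ℚ (Set.range basE) := by
  intro a _
  rw [sl2_decomp a]
  refine Submodule.add_mem _ (Submodule.add_mem _ ?_ ?_) ?_ <;> apply Submodule.smul_mem <;>
    apply Submodule.subset_span
  exacts [⟨0, rfl⟩, ⟨1, rfl⟩, ⟨2, rfl⟩]

def bas : Module.Basis (Fin 3) ℚ sl2 := Module.Basis.mk sl2_li sl2_span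

lemma bas_dual {κ : sl2 →ₗ[ℚ] sl2 →ₗ[ℚ] ℚ} (h : IsTr κ) (i j : Fin 3) :
    κ (bas i) (dualE j) = if i = j then 1 else 0 := by
  rw [bas, Module.Basis.mk_apply, h]
  fin_cases i <;> fin_cases j <;> simp [basE, dualE, H, E, F]

lemma Phi_inj {κ : sl2 →ₗ[ℚ] sl2 →ₗ[ℚ] ℚ} (h : IsTr κ) (n : ℕ) : Function.Injective (Phi κ n) := by
  rw [← LinearMap.ker_eq_bot, LinearMap.ker_eq_bot']
  intro T hT
  let bb := Basis.piTensorProduct (R := ℚ) (fun _ : Fin n => bas)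
  have hk : ∀ d : Fin n → Fin 3, bb.coord d = pairT κ n (fun i => dualE (d i)) := by
    intro d
    apply bb.ext
    intro e
    simp only [Module.Basis.coord_apply, Module.Basis.repr_self]
    simp only [bb, Basis.piTensorProduct_apply, pairT, PiTensorProduct.lift.tprod]
    simp only [MultilinearMap.compLinearMap_apply, MultilinearMap.mkPiAlgebra_apply,
      LinearMap.flip_apply, bas_dual h]
    rw [Finsupp.single_apply, Finset.prod_ite_zero]
    simp [funext_iff]
  apply bb.ext_elem
  intro d
  rw [← Module.Basis.coord_apply, hk]
  have := congrFun hT (fun i => dualE (d i))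
  simpa [Phi] using this

theorem partition_tensor_mem_span_of_big_block
    (κ : sl2 →ₗ[ℚ] sl2 →ₗ[ℚ] ℚ)
    (hHH : κ H H = 2) (hEF : κ E F = 1) (hFE : κ F E = 1)
    (hHE : κ H E = 0) (hEH : κ E H = 0) (hHF : κ H F = 0) (hFH : κ F H = 0)
    (hEE : κ E E = 0) (hFF : κ F F = 0) :
    ∀ n, 2 ≤ n →
    ∀ P : Finset (Finset (Fin n)), IsPartitionGe2 n P → (∃ B ∈ P, 3 ≤ B.card) →
    ∀ T : TP n, (∀ x : Fin n → sl2, pairT κ n x T = ∏ B ∈ P, blockVal κ x B) →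
    ∀ t : Equiv.Perm (Fin n) → TP n,
      (∀ σ (x : Fin n → sl2), pairT κ n x (t σ) = brkVal κ (x ∘ σ)) →
      T ∈ Submodule.span ℚ (Set.range t) := by
  intro n _ P hP hB T hT t ht
  obtain ⟨B, hBP, hB3⟩ := hB
  have h := isTr κ hHH hEF hFE hHE hEH hHF hFH hEE hFF
  have h1 := blocks_prod_mem h B.val hB3 _ (blockVal_mem κ B (by omega)) (P.erase B)
    (fun B' h' => hP.2 B' (Finset.mem_of_mem_erase h'))
  rw [Finset.add_sum_erase P (fun B => B.val) hBP, partition_sum P hP.1] at h1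
  have h2 : Phi κ n T ∈ Sp κ (Finset.univ : Finset (Fin n)).val := by
    convert h1 using 1
    funext x
    simp only [Phi, LinearMap.pi_apply, Pi.mul_apply, hT]
    exact (Finset.mul_prod_erase P (fun B => blockVal κ x B) hBP).symm
  have h3 : Sp κ (Finset.univ : Finset (Fin n)).val ≤
      (Submodule.span ℚ (Set.range t)).map (Phi κ n) := by
    refine Submodule.span_le.2 ?_
    rintro _ ⟨p, b, hpb, rfl⟩
    obtain ⟨σ, hσ⟩ := gen_perm κ p b hpb
    refine ⟨t σ, Submodule.subset_span ⟨σ, rfl⟩, ?_⟩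
    funext x
    simp only [Phi, LinearMap.pi_apply, ht, hσ]
  obtain ⟨T', hT', e⟩ := h3 h2
  rwa [← Phi_inj h n e]
end
end

section
/- For every n ≥ 2, the symmetric group Sₙ acts ℚ-linearly on sl₂^{⊗n} by permuting tensor factors, this action preserves the subspace Inv(sl₂^{⊗n}), and the subspace of Inv(sl₂^{⊗n}) consisting of tensors fixed by every permutation has dimension 1 if n is even and dimension 0 if n is odd. -/
/- The symmetric group Sₙ acts ℚ-linearly on sl₂^{⊗n} by permuting tensor
   factors (σ : m₁⊗⋯⊗mₙ ↦ m_{σ⁻¹(1)}⊗⋯⊗m_{σ⁻¹(n)}); this action preserves the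
   subspace Inv(sl₂^{⊗n}) of invariant tensors, and the subspace of
   Inv(sl₂^{⊗n}) of tensors fixed by every permutation has dimension 1 for n
   even and 0 for n odd (n ≥ 2). -/

open scoped TensorProduct

set_option synthInstance.maxHeartbeats 1000000
set_option maxHeartbeats 1000000

noncomputable section

/-- The ℚ-linear action of `σ ∈ Sₙ` on `sl₂^{⊗n}` permuting the tensor factors. -/
def permMap (n : ℕ) (σ : Equiv.Perm (Fin n)) : TP n →ₗ[ℚ] TP n :=
  (PiTensorProduct.reindex ℚ (fun _ : Fin n => sl2) σ).toLinearMap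

/-- The subspace of invariant tensors fixed by every permutation of the factors. -/
def SymFixedInvariants (n : ℕ) : Submodule ℚ (TP n) :=
  Invariants n ⊓ ⨅ σ : Equiv.Perm (Fin n), LinearMap.ker (permMap n σ - LinearMap.id)

namespace SymInv
open Finset

lemma tr (x : sl2) : x.1 1 1 = - x.1 0 0 := by
  have h : (Matrix.traceLinearMap (Fin 2) ℚ ℚ) x.1 = 0 := x.2
  simp [Matrix.trace_fin_two] at h
  linarith

/-- coordinates -/
def coordEquiv : sl2 ≃ₗ[ℚ] (Fin 3 → ℚ) where
  toFun x := ![x.1 0 0, x.1 0 1, x.1 1 0]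
  invFun c := ⟨!![c 0, c 1; c 2, - c 0], by
    change (Matrix.traceLinearMap (Fin 2) ℚ ℚ) _ = 0
    simp [Matrix.trace_fin_two]⟩
  map_add' x y := by ext k; fin_cases k <;> simp
  map_smul' r x := by ext k; fin_cases k <;> simp
  left_inv x := by
    have := tr x
    apply Subtype.ext
    ext i j
    fin_cases i <;> fin_cases j <;> simp [this]
  right_inv c := by ext k; fin_cases k <;> simp

def bas : Module.Basis (Fin 3) ℚ sl2 := Module.Basis.ofEquivFun coordEquiv

def A (x : sl2) : Matrix (Fin 3) (Fin 3) ℚ :=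
  !![0, -x.1 1 0, x.1 0 1; -2 * x.1 0 1, 2 * x.1 0 0, 0; 2 * x.1 1 0, 0, -2 * x.1 0 0]

lemma repr_ad (x y : sl2) (j : Fin 3) :
    bas.repr (LieAlgebra.ad ℚ sl2 x y) j = ∑ k, A x j k * bas.repr y k := by
  have := tr x
  have := tr y
  simp only [bas, Module.Basis.ofEquivFun_repr_apply, LieAlgebra.ad_apply, coordEquiv]
  fin_cases j <;> simp [A, Fin.sum_univ_three, Matrix.mul_apply, Fin.sum_univ_two, Ring.lie_def, *] <;> ring

def B (n : ℕ) : Module.Basis (Fin n → Fin 3) ℚ (TP n) :=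
  Basis.piTensorProduct (fun _ => bas)

def co {n : ℕ} (v : TP n) (s : Fin n → Fin 3) : ℚ := (B n).repr v s

lemma co_tprod {n : ℕ} (m : Fin n → sl2) (s : Fin n → Fin 3) :
    co (PiTensorProduct.tprod ℚ m) s = ∏ i, bas.repr (m i) (s i) := by
  simp [co, B]

lemma co_add {n : ℕ} (v w : TP n) (s) : co (v + w) s = co v s + co w s := by simp [co]
lemma co_smul {n : ℕ} (r : ℚ) (w : TP n) (s) : co (r • w) s = r * co w s := by simp [co]
lemma co_ext {n : ℕ} {v w : TP n} (h : ∀ s, co v s = co w s) : v = w :=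
  (B n).ext_elem h

lemma co_act {n : ℕ} (x : sl2) (v : TP n) (s : Fin n → Fin 3) :
    co (actOn n x v) s = ∑ i, ∑ k, A x (s i) k * co v (Function.update s i k) := by
  induction v using PiTensorProduct.induction_on with
  | smul_tprod r m =>
    rw [map_smul, co_smul]
    simp only [co_smul, co_tprod]
    simp only [actOn, LinearMap.sum_apply, PiTensorProduct.map_tprod]
    have : co (∑ i, PiTensorProduct.tprod ℚ (fun j => (if j = i then LieAlgebra.ad ℚ sl2 x else LinearMap.id) (m j))) s
      = ∑ i, co (PiTensorProduct.tprod ℚ (fun j => (if j = i then LieAlgebra.ad ℚ sl2 x else LinearMap.id) (m j))) s := by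
      simp [co]
    rw [this, mul_sum]
    refine sum_congr rfl fun i _ => ?_
    rw [co_tprod, ← mul_prod_erase univ _ (mem_univ i), if_pos rfl, repr_ad, sum_mul, mul_sum]
    refine sum_congr rfl fun k _ => ?_
    rw [← mul_prod_erase univ (fun j => bas.repr (m j) (Function.update s i k j)) (mem_univ i)]
    have h1 : ∀ j ∈ univ.erase i, bas.repr ((if j = i then LieAlgebra.ad ℚ sl2 x else LinearMap.id) (m j)) (s j) = bas.repr (m j) (Function.update s i k j) := by
      intro j hj
      have := ne_of_mem_erase hj
      simp [this]
    rw [prod_congr rfl h1]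
    simp only [Function.update_self]
    ring
  | add v w hv hw =>
    simp only [map_add, co_add, hv, hw, mul_add, sum_add_distrib]

lemma perm_tprod (n : ℕ) (σ : Equiv.Perm (Fin n)) (m : Fin n → sl2) :
    permMap n σ (PiTensorProduct.tprod ℚ m) = PiTensorProduct.tprod ℚ (fun i => m (σ⁻¹ i)) := by
  exact PiTensorProduct.reindex_tprod (s := fun _ => sl2) σ m

lemma co_perm {n : ℕ} (σ : Equiv.Perm (Fin n)) (v : TP n) (s : Fin n → Fin 3) :
    co (permMap n σ v) s = co v (s ∘ σ) := by
  induction v using PiTensorProduct.induction_on with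
  | smul_tprod r m =>
    rw [map_smul, co_smul, perm_tprod, co_smul, co_tprod, co_tprod]
    congr 1
    exact (Fintype.prod_equiv σ _ _ (by simp)).symm
  | add v w hv hw =>
    simp only [map_add, co_add, hv, hw]

lemma mem_inv {n : ℕ} (v : TP n) : v ∈ Invariants n ↔
    ∀ x s, ∑ i, ∑ k, A x (s i) k * co v (Function.update s i k) = 0 := by
  simp only [Invariants, Submodule.mem_iInf, LinearMap.mem_ker, ← co_act]
  refine forall_congr' fun x => ⟨fun h s => by simp [h, co], fun h => co_ext fun s => ?_⟩
  rw [h]; simp [co]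

lemma perm_inv {n : ℕ} (σ : Equiv.Perm (Fin n)) (v : TP n) (hv : v ∈ Invariants n) :
    permMap n σ v ∈ Invariants n := by
  rw [mem_inv] at *
  intro x s
  rw [← hv x (s ∘ σ)]
  refine Fintype.sum_equiv σ.symm _ _ fun i => ?_
  refine sum_congr rfl fun k _ => ?_
  rw [co_perm, Function.update_comp_equiv]
  simp

lemma mem_sym {n : ℕ} (v : TP n) : v ∈ SymFixedInvariants n ↔
    (∀ x s, ∑ i, ∑ k, A x (s i) k * co v (Function.update s i k) = 0) ∧
    ∀ (σ : Equiv.Perm (Fin n)) s, co v (s ∘ σ) = co v s := by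
  rw [SymFixedInvariants, Submodule.mem_inf, mem_inv]
  simp only [Submodule.mem_iInf, LinearMap.mem_ker, LinearMap.sub_apply, LinearMap.id_apply,
    sub_eq_zero, ← co_perm]
  refine and_congr Iff.rfl (forall_congr' fun σ => ⟨fun h s => by rw [h], fun h => co_ext h⟩)

def N {n : ℕ} (k : Fin 3) (s : Fin n → Fin 3) : ℕ := ∑ i, if s i = k then 1 else 0

lemma N_update {n : ℕ} (k j : Fin 3) (s : Fin n → Fin 3) (i : Fin n) :
    N k (Function.update s i j) + (if s i = k then 1 else 0) = N k s + (if j = k then 1 else 0) := by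
  unfold N
  rw [← add_sum_erase univ _ (mem_univ i), ← add_sum_erase univ (fun i => if s i = k then 1 else 0) (mem_univ i)]
  have : ∀ l ∈ univ.erase i, (if Function.update s i j l = k then 1 else 0) = if s l = k then 1 else 0 := by
    intro l hl
    simp [ne_of_mem_erase hl]
  rw [sum_congr rfl this]
  simp only [Function.update_self]
  omega

lemma N_sum {n : ℕ} (s : Fin n → Fin 3) : N 0 s + N 1 s + N 2 s = n := by
  unfold N
  rw [← sum_add_distrib, ← sum_add_distrib]
  rw [sum_congr rfl (g := fun _ => 1)]
  · simp
  · intro i _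
    generalize s i = k
    fin_cases k <;> simp

lemma sum_N {n : ℕ} (s : Fin n → Fin 3) (F : Fin 3 → ℚ) :
    ∑ i, F (s i) = N 0 s * F 0 + N 1 s * F 1 + N 2 s * F 2 := by
  unfold N
  push_cast
  rw [sum_mul, sum_mul, sum_mul, ← sum_add_distrib, ← sum_add_distrib]
  refine sum_congr rfl fun i _ => ?_
  generalize s i = k
  fin_cases k <;> simp

lemma exists_perm {n : ℕ} (s t : Fin n → Fin 3) (h : ∀ k, N k s = N k t) :
    ∃ σ : Equiv.Perm (Fin n), t ∘ σ = s := by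
  have e : ∀ k, Nonempty ({a // s a = k} ≃ {a // t a = k}) := by
    intro k
    rw [← Fintype.card_eq]
    have := h k
    simpa [N, Fintype.card_subtype] using this
  refine ⟨Equiv.ofFiberEquiv (fun k => (e k).some), ?_⟩
  funext a
  exact Equiv.ofFiberEquiv_map _ a

lemma co_eq {n : ℕ} {v : TP n} (hv : v ∈ SymFixedInvariants n) (s t : Fin n → Fin 3)
    (h1 : N 1 s = N 1 t) (h2 : N 2 s = N 2 t) : co v s = co v t := by
  have h0 : N 0 s = N 0 t := by
    have := N_sum s; have := N_sum t; omega
  obtain ⟨σ, rfl⟩ := exists_perm s t (by intro k; fin_cases k <;> assumption)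
  exact ((mem_sym v).1 hv).2 σ t

def xh : sl2 := coordEquiv.symm ![1, 0, 0]
def xe : sl2 := coordEquiv.symm ![0, 1, 0]

lemma A_h : A xh = !![0, 0, 0; 0, 2, 0; 0, 0, -2] := by
  simp [A, xh, coordEquiv]
lemma A_e : A xe = !![0, 0, 1; -2, 0, 0; 0, 0, 0] := by
  simp [A, xe, coordEquiv]

lemma weight {n : ℕ} {v : TP n} (hv : v ∈ SymFixedInvariants n) (s : Fin n → Fin 3)
    (h : N 1 s ≠ N 2 s) : co v s = 0 := by
  have := ((mem_sym v).1 hv).1 xh s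
  rw [sum_congr rfl (g := fun i => (![0, 2, -2] : Fin 3 → ℚ) (s i) * co v s)] at this
  · rw [← sum_mul, sum_N] at this
    have h' : (N 1 s : ℚ) - N 2 s ≠ 0 := by
      rw [sub_ne_zero]; exact_mod_cast h
    simp at this
    rcases this with this | this
    · exact absurd (by linarith) h'
    · exact this
  · intro i _
    rw [A_h]
    have hu := Function.update_eq_self i s
    generalize hk : s i = k at *
    fin_cases k <;> simp [Fin.sum_univ_three] <;> exact congrArg (co v) hu

lemma vanish {n : ℕ} {v : TP n} (hv : v ∈ SymFixedInvariants n)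
    (h0 : ∀ s, N 0 s = 0 → N 1 s = N 2 s → co v s = 0) :
    ∀ a s, N 0 s = a → co v s = 0 := by
  intro a
  induction a using Nat.strong_induction_on with
  | _ a ih =>
  intro s hs
  by_cases hw : N 1 s = N 2 s
  swap
  · exact weight hv s hw
  rcases Nat.eq_zero_or_pos a with rfl | ha
  · exact h0 s hs hw
  obtain ⟨i, hi⟩ : ∃ i, s i = 0 := by
    by_contra hne
    push Not at hne
    have : N 0 s = 0 := by simp [N, hne]
    omega
  set t := Function.update s i 1 with ht
  have t0 := N_update 0 1 s i
  have t1 := N_update 1 1 s i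
  have t2 := N_update 2 1 s i
  rw [← ht, hi] at t0 t1 t2
  simp at t0 t1 t2
  have key := ((mem_sym v).1 hv).1 xe t
  rw [sum_congr rfl (g := fun i => (![0, -2 * co v s, 0] : Fin 3 → ℚ) (t i))] at key
  · rw [sum_N] at key
    simp at key
    rcases key with key | key
    · omega
    · exact key
  · intro j _
    rw [A_e]
    have u : ∀ l k, _ := fun l k => N_update l k t j
    generalize hk : t j = k at *
    fin_cases k
    · have u0 := u 0 2
      simp at u0
      simp [Fin.sum_univ_three]
      exact ih (N 0 (Function.update t j 2)) (by omega) _ rfl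
    · have u1 := u 1 0
      have u2 := u 2 0
      simp at u1 u2
      simp [Fin.sum_univ_three]
      exact co_eq hv _ _ (by omega) (by omega)
    · simp [Fin.sum_univ_three]

def D (n : ℕ) : ℕ → ℚ
  | 0 => 1
  | b + 1 => 2 * (b + 1) / (n - 2 * b - 1) * D n b

def G (n p q : ℕ) : ℚ := if p = q then D n p else 0

def w (n : ℕ) : TP n := (B n).repr.symm (Finsupp.equivFunOnFinite.symm fun s => G n (N 1 s) (N 2 s))

lemma co_w (n : ℕ) (s) : co (w n) s = G n (N 1 s) (N 2 s) := by
  simp [co, w]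

lemma D_rec {n : ℕ} (hn : Even n) (b : ℕ) : D n (b + 1) * (n - 2 * b - 1) = 2 * (b + 1) * D n b := by
  have : (n : ℚ) - 2 * b - 1 ≠ 0 := by
    obtain ⟨m, rfl⟩ := hn
    intro h
    have : ((m + m : ℕ) : ℤ) - 2 * b - 1 = 0 := by exact_mod_cast h
    omega
  rw [D]
  field_simp

lemma G_rec {n : ℕ} (hn : Even n) (a p q : ℕ) (h : a + (p + 1) + q = n) :
    a * G n (p + 1) (q + 1) = 2 * (p + 1) * G n p q := by
  unfold G
  by_cases hpq : p = q
  · subst hpq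
    simp only [if_true]
    rw [← D_rec hn, ← h]
    push_cast
    ring
  · simp [hpq]

lemma G_symm (n p q : ℕ) : G n p q = G n q p := by
  unfold G
  split_ifs <;> simp_all

lemma w_mem {n : ℕ} (hn : Even n) : w n ∈ SymFixedInvariants n := by
  rw [mem_sym]
  constructor
  · intro x s
    simp only [co_w]
    set p := N 1 s with hp
    set q := N 2 s with hq
    rw [sum_congr rfl (g := fun i => (![x.1 0 1 * G n p (q+1) - x.1 1 0 * G n (p+1) q,
      2 * x.1 0 0 * G n p q - 2 * x.1 0 1 * G n (p-1) q,
      2 * x.1 1 0 * G n p (q-1) - 2 * x.1 0 0 * G n p q] : Fin 3 → ℚ) (s i))]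
    · rw [sum_N, ← hp, ← hq]
      have hs := N_sum s
      rw [← hp, ← hq] at hs
      simp
      have e1 : (N 0 s : ℚ) * G n p (q+1) = 2 * p * G n (p-1) q := by
        rcases p with _ | p
        · simp [G]
        · rw [G_rec hn _ _ _ hs]; simp
      have e2 : (N 0 s : ℚ) * G n (p+1) q = 2 * q * G n p (q-1) := by
        rcases q with _ | q
        · simp [G]
        · rw [G_symm n (p+1), G_rec hn _ q p (by omega), G_symm]; simp
      have e3 : (p : ℚ) * G n p q = q * G n p q := by
        by_cases h : p = q
        · rw [h]
        · simp [G, h]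
      linear_combination x.1 0 1 * e1 - x.1 1 0 * e2 + 2 * x.1 0 0 * e3
    · intro i _
      have u : ∀ l k, _ := fun l k => N_update l k s i
      have u10 := u 1 0
      have u11 := u 1 1
      have u12 := u 1 2
      have u20 := u 2 0
      have u21 := u 2 1
      have u22 := u 2 2
      rw [← hp] at u10 u11 u12
      rw [← hq] at u20 u21 u22
      rw [Fin.sum_univ_three]
      clear u
      generalize N 1 (Function.update s i 0) = a10 at *
      generalize N 1 (Function.update s i 1) = a11 at *
      generalize N 1 (Function.update s i 2) = a12 at *
      generalize N 2 (Function.update s i 0) = a20 at *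
      generalize N 2 (Function.update s i 1) = a21 at *
      generalize N 2 (Function.update s i 2) = a22 at *
      generalize s i = k at *
      clear_value p q
      fin_cases k
      · simp at u10 u11 u12 u20 u21 u22
        subst u10 u11 u12 u20 u21 u22
        simp [A]
        ring
      · simp at u10 u11 u12 u20 u21 u22
        subst u20 u21 u22 u10 u11
        simp [A]
        ring
      · simp at u10 u11 u12 u20 u21 u22
        subst u20 u22 u10 u11 u12
        simp [A]
        ring
  · intro σ s
    have : ∀ k, N k (s ∘ σ) = N k s := fun k =>
      Fintype.sum_equiv σ _ _ (by simp)
    simp only [co_w, this]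

lemma zero_of {n : ℕ} {v : TP n} (hv : v ∈ SymFixedInvariants n)
    (h0 : ∀ s, N 0 s = 0 → N 1 s = N 2 s → co v s = 0) : v = 0 := by
  apply co_ext
  intro s
  rw [vanish hv h0 _ s rfl]
  simp [co]

lemma D_ne {n : ℕ} (hn : Even n) (b : ℕ) : D n b ≠ 0 := by
  induction b with
  | zero => simp [D]
  | succ b ih =>
    intro h
    have := D_rec hn b
    rw [h, zero_mul] at this
    have h2 : (2 * ((b : ℚ) + 1)) ≠ 0 := by positivity
    exact mul_ne_zero h2 ih this.symm

lemma dim (n : ℕ) : Module.finrank ℚ (SymFixedInvariants n) = (if Even n then 1 else 0) := by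
  split_ifs with hn
  · have hw := w_mem hn
    obtain ⟨m, hm⟩ := hn
    have hd := D_ne ⟨m, hm⟩ m
    have hcw : ∀ s : Fin n → Fin 3, N 0 s = 0 → N 1 s = N 2 s → co (w n) s = D n m := by
      intro s h0 h1
      have := N_sum s
      have : N 2 s = m := by omega
      simp [co_w, h1, G, this]
    let s0 : Fin n → Fin 3 := fun i => if (i : ℕ) < m then 1 else 2
    have s00 : N 0 s0 = 0 := by
      apply sum_eq_zero
      intro i _
      by_cases h : (i : ℕ) < m <;> simp [s0, h]
    have s01 : N 1 s0 = m := by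
      have : ∀ i : Fin n, (if s0 i = 1 then 1 else 0) = if (i : ℕ) < m then 1 else 0 := by
        intro i
        by_cases h : (i : ℕ) < m <;> simp [s0, h]
      unfold N
      simp only [this]
      rw [Fin.sum_univ_eq_sum_range (fun i => if i < m then 1 else 0) n, hm, sum_range_add,
        sum_congr rfl (g := fun _ => 1)]
      · simp
      · intro i hi
        simpa using hi
    have s02 : N 2 s0 = m := by
      have := N_sum s0
      omega
    refine (finrank_eq_one_iff_of_nonzero' (⟨w n, hw⟩ : SymFixedInvariants n) ?_).2 ?_
    · intro h
      have h : w n = 0 := congrArg Subtype.val h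
      have := hcw s0 s00 (by omega)
      rw [h] at this
      exact hd (by rw [← this]; simp [co])
    · rintro ⟨v, hv⟩
      refine ⟨co v s0 / D n m, Subtype.ext ?_⟩
      have hmem := (SymFixedInvariants n).sub_mem ((SymFixedInvariants n).smul_mem (co v s0 / D n m) hw) hv
      refine sub_eq_zero.1 (zero_of hmem ?_)
      intro s h0 h1
      have hc : co v s = co v s0 := by
        have := N_sum s
        exact co_eq hv _ _ (by omega) (by omega)
      have : co ((co v s0 / D n m) • w n - v) s = (co v s0 / D n m) * co (w n) s - co v s := by
        simp [co]
      refine this.trans ?_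
      rw [hcw s h0 h1, hc]
      field_simp
      simp
  · have : SymFixedInvariants n = ⊥ := by
      rw [eq_bot_iff]
      intro v hv
      refine zero_of hv ?_
      intro s h0 h1
      exfalso
      have := N_sum s
      exact hn ⟨N 2 s, by omega⟩
    rw [this]
    simp

end SymInv

theorem symmetric_group_action_on_invariants :
    ∀ n, 2 ≤ n →
      (∀ (σ : Equiv.Perm (Fin n)) (m : Fin n → sl2),
        permMap n σ (PiTensorProduct.tprod ℚ m)
          = PiTensorProduct.tprod ℚ (fun i => m (σ⁻¹ i))) ∧
      (∀ σ τ : Equiv.Perm (Fin n),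
        permMap n (σ * τ) = (permMap n σ) ∘ₗ (permMap n τ)) ∧
      (∀ (σ : Equiv.Perm (Fin n)) (v : TP n), v ∈ Invariants n →
        permMap n σ v ∈ Invariants n) ∧
      Module.finrank ℚ (SymFixedInvariants n) = (if Even n then 1 else 0) := by
  intro n _
  refine ⟨SymInv.perm_tprod n, ?_, SymInv.perm_inv, SymInv.dim n⟩
  intro σ τ
  refine LinearMap.ext fun v => SymInv.co_ext fun s => ?_
  rw [LinearMap.comp_apply, SymInv.co_perm, SymInv.co_perm, SymInv.co_perm]
  rfl
end
end
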